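/- arXiv:1605.07532 — 2 statements merged into one kernel-verified Lean document; each statement's English description precedes it below -/
import Mathlib

section
/- Let G ∈ C¹(𝕋ⁿ × ℝⁿ) satisfy (A1), (A2) and let f ∈ C²(𝕋ⁿ × ℝ) satisfy (A3). Assume moreover that the ergodic equation f(x,0) + G(x,Du(x)) = 0 on 𝕋ⁿ admits a continuous viscosity solution (normalization of the ergodic constant to 0). For each ε > 0 let v^ε be a continuous viscosity solution of f(x, ε v^ε(x)) + G(x, Dv^ε(x)) = 0 on 𝕋ⁿ. Then there exists a continuous function v⁰ on 𝕋ⁿ such that v^ε converges uniformly on 𝕋ⁿ to v⁰ as ε → 0⁺, and v⁰ is a viscosity solution of f(x,0) + G(x,Dv⁰(x)) = 0 on 𝕋ⁿ. -/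
open Filter Set
open scoped Topology

noncomputable section

/-- Functions on the torus `𝕋ⁿ` are identified with `ℤⁿ`-periodic functions on `ℝⁿ`. -/
def ZnPeriodic {n : ℕ} (u : EuclideanSpace ℝ (Fin n) → ℝ) : Prop :=
  ∀ (x : EuclideanSpace ℝ (Fin n)) (k : Fin n → ℤ),
    u (x + (EuclideanSpace.equiv (Fin n) ℝ).symm (fun i => (k i : ℝ))) = u x

/-- Viscosity subsolution of `E(x, u(x), Du(x)) = 0` on `ℝⁿ`. -/
def ViscSub {n : ℕ} (E : EuclideanSpace ℝ (Fin n) → ℝ → EuclideanSpace ℝ (Fin n) → ℝ)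
    (u : EuclideanSpace ℝ (Fin n) → ℝ) : Prop :=
  ∀ φ : EuclideanSpace ℝ (Fin n) → ℝ, ContDiff ℝ 1 φ →
    ∀ x₀ : EuclideanSpace ℝ (Fin n), IsLocalMax (u - φ) x₀ →
      E x₀ (u x₀) (gradient φ x₀) ≤ 0

/-- Viscosity supersolution of `E(x, u(x), Du(x)) = 0` on `ℝⁿ`. -/
def ViscSuper {n : ℕ} (E : EuclideanSpace ℝ (Fin n) → ℝ → EuclideanSpace ℝ (Fin n) → ℝ)
    (u : EuclideanSpace ℝ (Fin n) → ℝ) : Prop :=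
  ∀ φ : EuclideanSpace ℝ (Fin n) → ℝ, ContDiff ℝ 1 φ →
    ∀ x₀ : EuclideanSpace ℝ (Fin n), IsLocalMin (u - φ) x₀ →
      0 ≤ E x₀ (u x₀) (gradient φ x₀)

/-- Viscosity solution. -/
def ViscSol {n : ℕ} (E : EuclideanSpace ℝ (Fin n) → ℝ → EuclideanSpace ℝ (Fin n) → ℝ)
    (u : EuclideanSpace ℝ (Fin n) → ℝ) : Prop :=
  ViscSub E u ∧ ViscSuper E u

abbrev Eu (n : ℕ) := EuclideanSpace ℝ (Fin n)

def shiftK {n : ℕ} (k : Fin n → ℤ) : Eu n :=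
  (EuclideanSpace.equiv (Fin n) ℝ).symm (fun i => (k i : ℝ))

lemma exists_fund (n : ℕ) : ∃ Q : Set (Eu n), IsCompact Q ∧ Q.Nonempty ∧
    ∀ x : Eu n, ∃ k : Fin n → ℤ, x + shiftK k ∈ Q := by
  refine ⟨(EuclideanSpace.equiv (Fin n) ℝ).symm '' (Set.pi univ (fun _ => Icc (0:ℝ) 1)), ?_, ?_, ?_⟩
  · exact (isCompact_univ_pi (fun _ => isCompact_Icc)).image
      (EuclideanSpace.equiv (Fin n) ℝ).symm.continuous
  · refine ⟨_, mem_image_of_mem _ (x := fun _ => (0:ℝ)) ?_⟩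
    intro i _
    simp
  · intro x
    refine ⟨fun i => -⌊x i⌋, ?_⟩
    refine ⟨fun i => Int.fract (x i), ?_, ?_⟩
    · intro i _
      exact ⟨Int.fract_nonneg _, (Int.fract_lt_one _).le⟩
    · ext i
      simp [shiftK, Int.fract, sub_eq_add_neg]

lemma per_bounded {n : ℕ} {u : Eu n → ℝ} (hc : Continuous u) (hp : ZnPeriodic u) :
    ∃ B : ℝ, 0 ≤ B ∧ ∀ x, |u x| ≤ B := by
  obtain ⟨Q, hQ, ⟨q, hq⟩, hk⟩ := exists_fund n
  obtain ⟨B, hB⟩ := hQ.exists_bound_of_continuousOn hc.continuousOn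
  refine ⟨B, (norm_nonneg _).trans (hB q hq), fun x => ?_⟩
  obtain ⟨k, hk⟩ := hk x
  have := hB _ hk
  rw [shiftK, hp x k] at this
  exact this

lemma hasGrad_sq {n : ℕ} (K : ℝ) (a y : Eu n) :
    HasGradientAt (fun z : Eu n => K / 2 * ‖z - a‖ ^ 2) (K • (y - a)) y := by
  rw [hasGradientAt_iff_hasFDerivAt]
  have h1 : HasFDerivAt (fun z : Eu n => z - a) (ContinuousLinearMap.id ℝ (Eu n)) y :=
    (hasFDerivAt_id y).sub_const a
  have h2 := (h1.norm_sq).const_mul (K / 2)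
  refine h2.congr_fderiv ?_
  ext z
  simp
  ring

lemma contDiff_sq {n : ℕ} (K : ℝ) (a : Eu n) :
    ContDiff ℝ 1 (fun z : Eu n => K / 2 * ‖z - a‖ ^ 2) :=
  contDiff_const.mul ((contDiff_id.sub contDiff_const).norm_sq ℝ)

/-- Doubling (tripling) of variables. -/
lemma doubling {n : ℕ} {G : Eu n → Eu n → ℝ}
    (hGc : Continuous (fun q : Eu n × Eu n => G q.1 q.2))
    (hconv : ∀ x : Eu n, ConvexOn ℝ Set.univ (G x))
    {g1 g2 g3 w1 w2 w3 : Eu n → ℝ}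
    (hg1 : Continuous g1) (hg2 : Continuous g2) (hg3 : Continuous g3)
    (hw1 : Continuous w1) (hw2 : Continuous w2) (hw3 : Continuous w3)
    (hp1 : ZnPeriodic w1) (hp2 : ZnPeriodic w2) (hp3 : ZnPeriodic w3)
    {L : ℝ} (hL : 0 ≤ L)
    (hL1 : ∀ x y, w1 y ≤ w1 x + L * ‖y - x‖) (hL2 : ∀ x y, w2 y ≤ w2 x + L * ‖y - x‖)
    (hs1 : ViscSub (fun x _ p => g1 x + G x p) w1)
    (hs2 : ViscSub (fun x _ p => g2 x + G x p) w2)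
    (hs3 : ViscSuper (fun x _ p => g3 x + G x p) w3)
    {s : ℝ} (s0 : 0 < s) (s1 : s < 1) :
    ∃ z, (∀ x, (1 - s) * w1 x + s * w2 x - w3 x ≤ (1 - s) * w1 z + s * w2 z - w3 z) ∧
      (1 - s) * g1 z + s * g2 z ≤ g3 z := by
  obtain ⟨Q, hQ, ⟨q0, hq0⟩, hk⟩ := exists_fund n
  -- the compact parameter set
  have hS : IsCompact (Q ×ˢ (Metric.closedBall (0 : Eu n) (2 * L) ×ˢ
      Metric.closedBall (0 : Eu n) (2 * L))) :=
    hQ.prod ((isCompact_closedBall _ _).prod (isCompact_closedBall _ _))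
  set S := Q ×ˢ (Metric.closedBall (0 : Eu n) (2 * L) ×ˢ Metric.closedBall (0 : Eu n) (2 * L))
    with hSdef
  have key : ∀ h : ℝ, 0 < h → ∃ t ∈ S,
      (∀ x y z, (1 - s) * w1 x + s * w2 y - w3 z - h⁻¹ / 2 * ((1 - s) * ‖x - z‖ ^ 2 + s * ‖y - z‖ ^ 2)
        ≤ (1 - s) * w1 (t.1 + h • t.2.1) + s * w2 (t.1 + h • t.2.2) - w3 t.1
          - h⁻¹ / 2 * ((1 - s) * ‖h • t.2.1‖ ^ 2 + s * ‖h • t.2.2‖ ^ 2)) := by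
    intro h hh
    have hcont : Continuous (fun t : Eu n × Eu n × Eu n =>
        (1 - s) * w1 (t.1 + h • t.2.1) + s * w2 (t.1 + h • t.2.2) - w3 t.1
          - h⁻¹ / 2 * ((1 - s) * ‖h • t.2.1‖ ^ 2 + s * ‖h • t.2.2‖ ^ 2)) := by fun_prop
    obtain ⟨t, htS, ht⟩ := hS.exists_isMaxOn
      ⟨(q0, 0, 0), by simp [hSdef, hq0, hL]⟩ hcont.continuousOn
    refine ⟨t, htS, ?_⟩
    have red : ∀ (w : Eu n → ℝ), (∀ x y, w y ≤ w x + L * ‖y - x‖) → ∀ x z : Eu n,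
        ∃ p ∈ Metric.closedBall (0 : Eu n) (2 * L),
          w x - h⁻¹ / 2 * ‖x - z‖ ^ 2 ≤ w (z + h • p) - h⁻¹ / 2 * ‖h • p‖ ^ 2 := by
      intro w hw x z
      by_cases hx : ‖x - z‖ ≤ 2 * L * h
      · refine ⟨h⁻¹ • (x - z), ?_, ?_⟩
        · rw [mem_closedBall_zero_iff, norm_smul, norm_inv, Real.norm_eq_abs, abs_of_pos hh,
            inv_mul_le_iff₀ hh]
          linarith
        · rw [smul_inv_smul₀ hh.ne']
          simp
      · push Not at hx
        refine ⟨0, by simp [hL], ?_⟩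
        have h1 := hw z x
        have h2 : L * ‖x - z‖ ≤ h⁻¹ / 2 * ‖x - z‖ ^ 2 := by
          have h3 : L ≤ h⁻¹ / 2 * ‖x - z‖ := by
            have : h⁻¹ / 2 * (2 * L * h) ≤ h⁻¹ / 2 * ‖x - z‖ :=
              mul_le_mul_of_nonneg_left hx.le (by positivity)
            calc L = h⁻¹ / 2 * (2 * L * h) := by field_simp
              _ ≤ _ := this
          calc L * ‖x - z‖ ≤ (h⁻¹ / 2 * ‖x - z‖) * ‖x - z‖ :=
                mul_le_mul_of_nonneg_right h3 (norm_nonneg _)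
            _ = _ := by ring
        simp
        linarith
    intro x y z
    obtain ⟨k, hkz⟩ := hk z
    obtain ⟨p, hp, hpi⟩ := red w1 hL1 (x + shiftK k) (z + shiftK k)
    obtain ⟨q, hq, hqi⟩ := red w2 hL2 (y + shiftK k) (z + shiftK k)
    have hm := ht (show (z + shiftK k, p, q) ∈ S from ⟨hkz, hp, hq⟩)
    simp only [Set.mem_ofPred_eq] at hm
    have e1 : w1 (x + shiftK k) = w1 x := hp1 x k
    have e2 : w2 (y + shiftK k) = w2 y := hp2 y k
    have e3 : w3 (z + shiftK k) = w3 z := hp3 z k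
    rw [e1, add_sub_add_right_eq_sub] at hpi
    rw [e2, add_sub_add_right_eq_sub] at hqi
    rw [e3] at hm
    have a1 := mul_le_mul_of_nonneg_left hpi (sub_nonneg.2 s1.le)
    have a2 := mul_le_mul_of_nonneg_left hqi s0.le
    nlinarith [a1, a2, hm]
  have hpos : ∀ m : ℕ, (0 : ℝ) < 1 / ((m : ℝ) + 1) := fun m => Nat.one_div_pos_of_nat
  choose t htS ht using fun m : ℕ => key (1 / ((m : ℝ) + 1)) (hpos m)
  obtain ⟨T, hTS, φ, hφ, hT⟩ := hS.tendsto_subseq htS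
  have hh0 : Tendsto (fun m : ℕ => 1 / (((φ m : ℕ) : ℝ) + 1)) atTop (𝓝 0) :=
    tendsto_one_div_add_atTop_nhds_zero_nat.comp hφ.tendsto_atTop
  have T1 : Tendsto (fun m => (t (φ m)).1) atTop (𝓝 T.1) := (continuous_fst.tendsto T).comp hT
  have T2 : Tendsto (fun m => (t (φ m)).2.1) atTop (𝓝 T.2.1) :=
    ((continuous_fst.comp continuous_snd).tendsto T).comp hT
  have T3 : Tendsto (fun m => (t (φ m)).2.2) atTop (𝓝 T.2.2) :=
    ((continuous_snd.comp continuous_snd).tendsto T).comp hT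
  have X1 : Tendsto (fun m => (t (φ m)).1 + (1 / (((φ m : ℕ) : ℝ) + 1)) • (t (φ m)).2.1) atTop (𝓝 T.1) := by
    simpa using T1.add (hh0.smul T2)
  have X2 : Tendsto (fun m => (t (φ m)).1 + (1 / (((φ m : ℕ) : ℝ) + 1)) • (t (φ m)).2.2) atTop (𝓝 T.1) := by
    simpa using T1.add (hh0.smul T3)
  refine ⟨T.1, ?_, ?_⟩
  · intro x
    have lim : Tendsto (fun m => (1 - s) * w1 ((t (φ m)).1 + (1 / (((φ m : ℕ) : ℝ) + 1)) • (t (φ m)).2.1)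
        + s * w2 ((t (φ m)).1 + (1 / (((φ m : ℕ) : ℝ) + 1)) • (t (φ m)).2.2) - w3 (t (φ m)).1) atTop
        (𝓝 ((1 - s) * w1 T.1 + s * w2 T.1 - w3 T.1)) :=
      ((((hw1.tendsto _).comp X1).const_mul _).add (((hw2.tendsto _).comp X2).const_mul _)).sub
        ((hw3.tendsto _).comp T1)
    refine ge_of_tendsto' lim fun m => ?_
    have := ht (φ m) x x x
    have hn : 0 ≤ (1 / (((φ m : ℕ) : ℝ) + 1))⁻¹ / 2 * ((1 - s) * ‖(1 / (((φ m : ℕ) : ℝ) + 1)) • (t (φ m)).2.1‖ ^ 2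
        + s * ‖(1 / (((φ m : ℕ) : ℝ) + 1)) • (t (φ m)).2.2‖ ^ 2) := by
      have := sub_pos.2 s1
      positivity
    simp only [sub_self, norm_zero] at this
    norm_num at this hn ⊢
    linarith
  · -- viscosity inequalities
    have V : ∀ m : ℕ, (1 - s) * g1 ((t m).1 + (1 / ((m : ℝ) + 1)) • (t m).2.1) +
        (1 - s) * G ((t m).1 + (1 / ((m : ℝ) + 1)) • (t m).2.1) (t m).2.1 ≤ 0 ∧
        s * g2 ((t m).1 + (1 / ((m : ℝ) + 1)) • (t m).2.2) +
        s * G ((t m).1 + (1 / ((m : ℝ) + 1)) • (t m).2.2) (t m).2.2 ≤ 0 ∧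
        0 ≤ g3 (t m).1 + G (t m).1 ((1 - s) • (t m).2.1 + s • (t m).2.2) := by
      intro m
      have hm := hpos m
      have hmax := ht m
      set h : ℝ := 1 / ((m : ℝ) + 1)
      set z := (t m).1
      set p := (t m).2.1
      set q := (t m).2.2
      refine ⟨?_, ?_, ?_⟩
      · have := hs1 _ (contDiff_sq h⁻¹ z) (z + h • p) (Filter.Eventually.of_forall fun x => by
          have := hmax x (z + h • q) z
          simp only [add_sub_cancel_left] at this
          have h5 : (1 - s) * (w1 x - h⁻¹ / 2 * ‖x - z‖ ^ 2) ≤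
            (1 - s) * (w1 (z + h • p) - h⁻¹ / 2 * ‖h • p‖ ^ 2) := by nlinarith [this]
          have := le_of_mul_le_mul_left h5 (sub_pos.2 s1)
          simpa using this)
        rw [(hasGrad_sq h⁻¹ z (z + h • p)).gradient, add_sub_cancel_left, inv_smul_smul₀ hm.ne'] at this
        nlinarith [sub_pos.2 s1]
      · have := hs2 _ (contDiff_sq h⁻¹ z) (z + h • q) (Filter.Eventually.of_forall fun x => by
          have := hmax (z + h • p) x z
          simp only [add_sub_cancel_left] at this
          have h5 : s * (w2 x - h⁻¹ / 2 * ‖x - z‖ ^ 2) ≤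
            s * (w2 (z + h • q) - h⁻¹ / 2 * ‖h • q‖ ^ 2) := by nlinarith [this]
          have := le_of_mul_le_mul_left h5 s0
          simpa using this)
        rw [(hasGrad_sq h⁻¹ z (z + h • q)).gradient, add_sub_cancel_left, inv_smul_smul₀ hm.ne'] at this
        nlinarith
      · have hcd : ContDiff ℝ 1 (fun y : Eu n => (-(h⁻¹ * (1 - s))) / 2 * ‖y - (z + h • p)‖ ^ 2 +
            (-(h⁻¹ * s)) / 2 * ‖y - (z + h • q)‖ ^ 2) := (contDiff_sq _ _).add (contDiff_sq _ _)
        have hgr : HasGradientAt (fun y : Eu n => (-(h⁻¹ * (1 - s))) / 2 * ‖y - (z + h • p)‖ ^ 2 +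
            (-(h⁻¹ * s)) / 2 * ‖y - (z + h • q)‖ ^ 2)
            ((-(h⁻¹ * (1 - s))) • (z - (z + h • p)) + (-(h⁻¹ * s)) • (z - (z + h • q))) z := by
          have e1 := (hasGrad_sq (-(h⁻¹ * (1 - s))) (z + h • p) z).hasFDerivAt
          have e2 := (hasGrad_sq (-(h⁻¹ * s)) (z + h • q) z).hasFDerivAt
          rw [hasGradientAt_iff_hasFDerivAt, map_add]
          exact e1.add e2
        have := hs3 _ hcd z (Filter.Eventually.of_forall fun y => by
          have := hmax (z + h • p) (z + h • q) y
          have c1 := norm_sub_rev (z + h • p) y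
          have c2 := norm_sub_rev (z + h • q) y
          rw [c1, c2] at this
          simp only [Pi.sub_apply, sub_add_cancel_left, norm_neg]
          linarith)
        rw [hgr.gradient] at this
        convert this using 3
        simp only [sub_add_cancel_left, smul_neg, neg_smul, neg_neg, smul_smul]
        congr 1 <;> field_simp <;> simp only [neg_smul, neg_neg]
    have cG : ∀ (a b : ℕ → Eu n) (A B : Eu n), Tendsto a atTop (𝓝 A) → Tendsto b atTop (𝓝 B) →
        Tendsto (fun m => G (a m) (b m)) atTop (𝓝 (G A B)) := fun a b A B ha hb =>
      (hGc.tendsto (A, B)).comp (ha.prodMk_nhds hb)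
    have r1 : (1 - s) * g1 T.1 + (1 - s) * G T.1 T.2.1 ≤ 0 :=
      le_of_tendsto' ((((hg1.tendsto _).comp X1).const_mul _).add ((cG _ _ _ _ X1 T2).const_mul _))
        fun m => (V (φ m)).1
    have r2 : s * g2 T.1 + s * G T.1 T.2.2 ≤ 0 :=
      le_of_tendsto' ((((hg2.tendsto _).comp X2).const_mul _).add ((cG _ _ _ _ X2 T3).const_mul _))
        fun m => (V (φ m)).2.1
    have r3 : 0 ≤ g3 T.1 + G T.1 ((1 - s) • T.2.1 + s • T.2.2) :=
      ge_of_tendsto' (((hg3.tendsto _).comp T1).add (cG _ _ _ _ T1 ((T2.const_smul _).add (T3.const_smul _))))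
        fun m => (V (φ m)).2.2
    have r4 := (hconv T.1).2 (mem_univ T.2.1) (mem_univ T.2.2) (sub_pos.2 s1).le s0.le (by ring)
    simp only [smul_eq_mul] at r4
    linarith

lemma lip_coercive {n : ℕ} {G : Eu n → Eu n → ℝ} {C R : ℝ} (hR : 0 < R)
    (hG : ∀ x p, R ≤ ‖p‖ → C < G x p) {u : Eu n → ℝ} (hc : Continuous u) (hp : ZnPeriodic u)
    (hs : ∀ φ : Eu n → ℝ, ContDiff ℝ 1 φ → ∀ x₀, IsLocalMax (u - φ) x₀ →
      G x₀ (gradient φ x₀) ≤ C) (x y : Eu n) : u y ≤ u x + 2 * R * ‖y - x‖ := by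
  obtain ⟨B, hB0, hB⟩ := per_bounded hc hp
  refine le_of_forall_pos_le_add fun e he => ?_
  obtain ⟨d, hd, hdu⟩ := Metric.continuousAt_iff.1 (hc.continuousAt (x := x)) (e / 2) (by positivity)
  set η := min d (e / (4 * R)) with hη
  have hη0 : 0 < η := by positivity
  have hpos : ∀ z : Eu n, 0 < ‖z - x‖ ^ 2 + η ^ 2 := fun z => by positivity
  set φ : Eu n → ℝ := fun z => 2 * R * √(‖z - x‖ ^ 2 + η ^ 2) with hφ
  have hcd : ContDiff ℝ 1 φ := by
    refine contDiff_const.mul (ContDiff.sqrt ?_ fun z => (hpos z).ne')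
    exact ((contDiff_id.sub contDiff_const).norm_sq ℝ).add contDiff_const
  have hgr : ∀ z, HasGradientAt φ ((2 * R / √(‖z - x‖ ^ 2 + η ^ 2)) • (z - x)) z := by
    intro z
    rw [hasGradientAt_iff_hasFDerivAt]
    have h1 : HasFDerivAt (fun z : Eu n => z - x) (ContinuousLinearMap.id ℝ (Eu n)) z :=
      (hasFDerivAt_id z).sub_const x
    have h2 := (((h1.norm_sq).add_const (η ^ 2)).sqrt (hpos z).ne').const_mul (2 * R)
    refine h2.congr_fderiv ?_
    ext w
    simp
    field_simp
  have hge : ∀ z, 2 * R * ‖z - x‖ ≤ φ z := fun z =>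
    mul_le_mul_of_nonneg_left (Real.le_sqrt_of_sq_le (by nlinarith [sq_nonneg η])) (by positivity)
  have hle : ∀ z, φ z ≤ 2 * R * (‖z - x‖ + η) := fun z => by
    refine mul_le_mul_of_nonneg_left ?_ (by positivity)
    rw [Real.sqrt_le_left (by positivity)]
    nlinarith [norm_nonneg (z - x)]
  have htend : Tendsto (u - φ) (cocompact (Eu n)) atBot := by
    have h1 : Tendsto (fun z : Eu n => ‖z - x‖) (cocompact (Eu n)) atTop := by
      simpa [dist_eq_norm] using tendsto_dist_right_cocompact_atTop x
    have h2 : Tendsto (fun z : Eu n => B - 2 * R * ‖z - x‖) (cocompact (Eu n)) atBot := by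
      have := tendsto_neg_atTop_atBot.comp (h1.const_mul_atTop (show 0 < 2 * R by positivity))
      simpa [sub_eq_add_neg, Function.comp_def] using tendsto_atBot_add_const_left _ B this
    refine tendsto_atBot_mono (fun z => ?_) h2
    have := (abs_le.1 (hB z)).2
    have := hge z
    simp only [Pi.sub_apply]
    linarith
  obtain ⟨m, hm⟩ := (hc.sub hcd.continuous).exists_forall_ge htend
  have hv := hs φ hcd m (Filter.Eventually.of_forall hm)
  rw [(hgr m).gradient] at hv
  have hclose : ‖m - x‖ < η := by
    by_contra hcon
    push Not at hcon
    refine absurd hv (not_le.2 (hG _ _ ?_))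
    rw [norm_smul, Real.norm_of_nonneg (by positivity), div_mul_eq_mul_div,
      le_div_iff₀ (Real.sqrt_pos.2 (hpos m))]
    have : √(‖m - x‖ ^ 2 + η ^ 2) ≤ 2 * ‖m - x‖ := by
      rw [Real.sqrt_le_left (by positivity)]
      nlinarith
    nlinarith
  have h1 := hm y
  simp only [Pi.sub_apply] at h1
  have h2 := hdu (x := m) (by rw [dist_eq_norm]; exact hclose.trans_le (min_le_left _ _))
  rw [Real.dist_eq] at h2
  have h3 := (abs_lt.1 h2).2
  have h4 : 2 * R * η ≤ e / 2 := by
    have : η ≤ e / (4 * R) := min_le_right _ _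
    calc 2 * R * η ≤ 2 * R * (e / (4 * R)) := by gcongr
      _ = e / 2 := by field_simp; norm_num
  have h5 := hle y
  have h6 : 0 ≤ φ m := by positivity
  linarith

lemma hasGrad_lin {n : ℕ} (e y : Eu n) :
    HasGradientAt (fun z : Eu n => inner ℝ e z) e y := by
  rw [hasGradientAt_iff_hasFDerivAt]
  exact (InnerProductSpace.toDual ℝ (Eu n) e).hasFDerivAt

lemma contDiff_lin {n : ℕ} (e : Eu n) : ContDiff ℝ 1 (fun z : Eu n => inner ℝ e z) :=
  (InnerProductSpace.toDual ℝ (Eu n) e).contDiff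

/-- one dimensional ray argument: no interior maxima along the direction `e` -/
lemma ray_mono {n : ℕ} {e : Eu n} (he : ‖e‖ = 1) (hspan : ∀ x : Eu n, x = (inner ℝ e x) • e)
    {u : Eu n → ℝ} (hc : Continuous u) {B : ℝ} (hB : ∀ x, |u x| ≤ B) {R : ℝ} (hR : 0 < R)
    (hno : ∀ x₀, ¬ IsLocalMax (u - fun z => inner ℝ (R • e) z) x₀)
    (x y : Eu n) (hxy : inner ℝ e x ≤ inner ℝ e y) : u y ≤ u x + R * ‖y - x‖ := by
  have hnorm : ∀ z : Eu n, ‖z‖ = |inner ℝ e z| := fun z => by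
    conv_lhs => rw [hspan z, norm_smul, he, mul_one]
    rfl
  have hyx : ‖y - x‖ = inner ℝ e y - inner ℝ e x := by
    rw [hnorm, inner_sub_right, abs_of_nonneg (sub_nonneg.2 hxy)]
  by_contra hcon
  push Not at hcon
  rw [hyx] at hcon
  set s : Set (Eu n) := {z | inner ℝ e x ≤ inner ℝ e z} with hs
  have hci : Continuous (fun z : Eu n => inner ℝ e z) := (contDiff_lin e).continuous
  have hsc : IsClosed s := isClosed_le continuous_const hci
  have hgc : Continuous (u - fun z => inner ℝ (R • e) z) := hc.sub (contDiff_lin (R • e)).continuous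
  have hRi : ∀ z, (u - fun z => inner ℝ (R • e) z) z = u z - R * inner ℝ e z := fun z => by
    simp [inner_smul_left]
  have h1 : Tendsto (fun z : Eu n => ‖z - x‖) (cocompact (Eu n)) atTop := by
    simpa [dist_eq_norm] using tendsto_dist_right_cocompact_atTop x
  obtain ⟨m, hms, hm⟩ := hgc.continuousOn.exists_isMaxOn' hsc (show x ∈ s by simp [hs]) (by
    rw [eventually_inf_principal]
    filter_upwards [h1.eventually_ge_atTop (2 * B / R)] with z hz hzs
    rw [hRi, hRi]
    rw [hnorm, inner_sub_right, abs_of_nonneg (sub_nonneg.2 hzs), div_le_iff₀ hR] at hz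
    have a1 := (abs_le.1 (hB z)).2
    have a2 := (abs_le.1 (hB x)).1
    linarith)
  have hmy := hm (show y ∈ s from hxy)
  simp only [Set.mem_ofPred_eq] at hmy
  rw [hRi, hRi] at hmy
  have hne : inner ℝ e x < inner ℝ e m := by
    rcases lt_or_eq_of_le (show inner ℝ e x ≤ inner ℝ e m from hms) with h | h
    · exact h
    · exfalso
      have : m = x := by rw [hspan m, hspan x, h]
      rw [this] at hmy
      linarith
  refine hno m (hm.isLocalMax ?_)
  filter_upwards [(isOpen_lt continuous_const hci).mem_nhds hne] with z hz
  exact le_of_lt hz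

lemma lip_one {n : ℕ} {e : Eu n} (he : ‖e‖ = 1) (hspan : ∀ x : Eu n, x = (inner ℝ e x) • e)
    {G : Eu n → Eu n → ℝ} {C R : ℝ} (hR : 0 < R)
    (hG1 : ∀ x, C < G x (R • e)) (hG2 : ∀ x, G x (-(R • e)) < - C)
    {u : Eu n → ℝ} (hc : Continuous u) (hp : ZnPeriodic u)
    (hs : ∀ φ : Eu n → ℝ, ContDiff ℝ 1 φ → ∀ x₀, IsLocalMax (u - φ) x₀ →
      G x₀ (gradient φ x₀) ≤ C)
    (hs' : ∀ φ : Eu n → ℝ, ContDiff ℝ 1 φ → ∀ x₀, IsLocalMin (u - φ) x₀ →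
      - C ≤ G x₀ (gradient φ x₀)) (x y : Eu n) : u y ≤ u x + R * ‖y - x‖ := by
  obtain ⟨B, hB0, hB⟩ := per_bounded hc hp
  rcases le_total (inner ℝ e x) (inner ℝ e y) with h | h
  · refine ray_mono he hspan hc hB hR (fun x₀ hx => ?_) x y h
    have := hs _ (contDiff_lin _) x₀ hx
    rw [(hasGrad_lin _ _).gradient] at this
    exact absurd this (not_le.2 (hG1 _))
  · have := ray_mono (u := fun z => - u z) he hspan hc.neg (B := B) (by simpa using hB) hR
      (fun x₀ hx => ?_) y x h
    · rw [norm_sub_rev]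
      linarith
    · have hx2 := hx.neg
      have := hs' _ (contDiff_lin (-(R • e))) x₀ (by
        refine hx2.congr (Filter.Eventually.of_forall fun z => ?_)
        simp [inner_neg_left]
        try ring)
      rw [(hasGrad_lin _ _).gradient] at this
      exact absurd this (not_le.2 (hG2 _))

lemma lip_all {n : ℕ} {G : Eu n → Eu n → ℝ}
    (hGc : Continuous (fun q : Eu n × Eu n => G q.1 q.2))
    (hGper : ∀ (x p : Eu n) (k : Fin n → ℤ), G (x + shiftK k) p = G x p)
    (hconv : ∀ x : Eu n, ConvexOn ℝ Set.univ (G x))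
    (hA1 : ∀ C : ℝ, ∃ R : ℝ, ∀ (x p : Eu n), R ≤ ‖p‖ →
      C ≤ (G x p) ^ 2 / (2 * ‖p‖) - ‖fderiv ℝ (fun y => G y p) x‖) (C : ℝ) :
    ∃ K : ℝ, 0 ≤ K ∧ ∀ u : Eu n → ℝ, Continuous u → ZnPeriodic u →
    (∀ φ : Eu n → ℝ, ContDiff ℝ 1 φ → ∀ x₀, IsLocalMax (u - φ) x₀ →
      G x₀ (gradient φ x₀) ≤ C) →
    (∀ φ : Eu n → ℝ, ContDiff ℝ 1 φ → ∀ x₀, IsLocalMin (u - φ) x₀ →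
      - C ≤ G x₀ (gradient φ x₀)) → ∀ x y, u y ≤ u x + K * ‖y - x‖ := by
  have hGx : ∀ p, Continuous (fun x => G x p) := fun p =>
    hGc.comp (Continuous.prodMk_left p)
  have hGp : ∀ x, Continuous (fun p => G x p) := fun x =>
    hGc.comp (Continuous.prodMk_right x)
  obtain ⟨D, hD0, hD⟩ := per_bounded (hGx 0) (fun x k => hGper x 0 k)
  -- a level above everything
  set A := max C D with hA
  have hA0 : 0 ≤ A := hD0.trans (le_max_right _ _)
  obtain ⟨R0, hR0⟩ := hA1 1
  set R := max (max R0 1) (A ^ 2 + 1) with hRdef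
  have hR1 : 1 ≤ R := (le_max_right _ _).trans (le_max_left _ _)
  have hRpos : 0 < R := by linarith
  have habs : ∀ x p, R ≤ ‖p‖ → A < |G x p| := by
    intro x p hp
    have hpp : 0 < ‖p‖ := hRpos.trans_le hp
    have h1 := hR0 x p (((le_max_left _ _).trans (le_max_left _ _)).trans hp)
    have h2 : 1 ≤ (G x p) ^ 2 / (2 * ‖p‖) := by
      have := norm_nonneg (fderiv ℝ (fun y => G y p) x)
      linarith
    rw [le_div_iff₀ (by positivity)] at h2
    have h3 : A ^ 2 + 1 ≤ R := le_max_right _ _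
    refine lt_of_pow_lt_pow_left₀ 2 (abs_nonneg _) ?_
    rw [sq_abs]
    linarith
  have hsym : ∀ x p, - (2 * D) ≤ G x p + G x (-p) := by
    intro x p
    have := (hconv x).2 (mem_univ p) (mem_univ (-p)) (show (0:ℝ) ≤ 1/2 by norm_num)
      (show (0:ℝ) ≤ 1/2 by norm_num) (by norm_num)
    simp only [smul_neg, add_neg_cancel, smul_eq_mul] at this
    have h2 := (abs_le.1 (hD x)).1
    linarith
  have hCA : C ≤ A := le_max_left _ _
  have hDA : D ≤ A := le_max_right _ _
  by_cases hco : ∀ x p, R ≤ ‖p‖ → A < G x p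
  · refine ⟨2 * R, by positivity, fun u hc hp hs _ => ?_⟩
    exact lip_coercive hRpos (fun x p h => hCA.trans_lt (hco x p h)) hc hp hs
  · push Not at hco
    obtain ⟨x0, p0, hp0, hG0⟩ := hco
    have hneg : G x0 p0 < -A := by
      rcases lt_abs.1 (habs x0 p0 hp0) with h | h
      · linarith
      · linarith
    have hpos' : A < G x0 (-p0) := by
      have := hsym x0 p0
      rcases lt_abs.1 (habs x0 (-p0) (by simpa using hp0)) with h | h
      · exact h
      · linarith
    have hp0' : 0 < ‖p0‖ := hRpos.trans_le hp0
    -- dimension is one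
    have hrank : ¬ (1 < Module.rank ℝ (Eu n)) := by
      intro hr
      have hcn := isPreconnected_sphere hr (0 : Eu n) ‖p0‖
      obtain ⟨q, hq, hq0⟩ := hcn.intermediate_value (a := p0) (b := -p0) (by simp) (by simp)
        (hGp x0).continuousOn (show (0:ℝ) ∈ Icc (G x0 p0) (G x0 (-p0)) from ⟨by linarith, by linarith⟩)
      have := habs x0 q (by simp at hq; rw [hq]; exact hp0)
      simp only [] at hq0
      rw [hq0] at this
      simp at this
      linarith
    have hfin : Module.finrank ℝ (Eu n) ≤ 1 := by
      rw [← Module.finrank_eq_rank] at hrank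
      have : ¬ (1 < Module.finrank ℝ (Eu n)) := fun h => hrank (by exact_mod_cast h)
      omega
    set e : Eu n := -(‖p0‖⁻¹ • p0) with he
    have hp0n : p0 ≠ 0 := norm_pos_iff.1 hp0'
    have henorm : ‖e‖ = 1 := by
      rw [he, norm_neg, norm_smul, norm_inv, norm_norm, inv_mul_cancel₀ hp0'.ne']
    have hspan : ∀ x : Eu n, x = (inner ℝ e x) • e := by
      intro x
      obtain ⟨w, hw⟩ := finrank_le_one_iff.1 hfin
      obtain ⟨c, hc⟩ := hw e
      obtain ⟨d, hd⟩ := hw x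
      have hc0 : c ≠ 0 := by
        rintro rfl
        rw [zero_smul] at hc
        rw [← hc] at henorm
        simp at henorm
      have hx : x = (d / c) • e := by
        rw [← hc, ← hd, smul_smul, div_mul_cancel₀ _ hc0]
      conv_rhs => rw [hx, inner_smul_right, real_inner_self_eq_norm_sq, henorm]
      rw [hx]; simp
    have hpe : p0 = -(‖p0‖ • e) := by
      rw [he, smul_neg, neg_neg, smul_inv_smul₀ hp0'.ne']
    refine ⟨‖p0‖, hp0'.le, fun u hc hp hs hs' => ?_⟩
    have hnegall : ∀ x, G x p0 < -A := by
      intro x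
      by_contra hcon
      have hx : A < G x p0 := by
        rcases lt_abs.1 (habs x p0 hp0) with h | h
        · exact h
        · exact absurd (by linarith) hcon
      obtain ⟨q, hq, hq0⟩ := (isPreconnected_univ (α := Eu n)).intermediate_value (mem_univ x0)
        (mem_univ x) (hGx p0).continuousOn
        (show (0:ℝ) ∈ Icc (G x0 p0) (G x p0) from ⟨by linarith, by linarith⟩)
      have := habs q p0 hp0
      simp only [] at hq0
      rw [hq0] at this
      simp at this
      linarith
    refine lip_one henorm hspan hp0' (C := C) (fun x => ?_) (fun x => ?_) hc hp hs hs'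
    · have h1 := hnegall x
      have h2 := hsym x p0
      rw [hpe, neg_neg, ← hpe] at h2
      rcases lt_abs.1 (habs x (‖p0‖ • e) (by rw [norm_smul, henorm]; simpa using hp0)) with h | h
      · linarith
      · linarith
    · rw [← hpe]
      have := hnegall x
      linarith

lemma grad_continuous {n : ℕ} {φ : Eu n → ℝ} (h : ContDiff ℝ 1 φ) : Continuous (gradient φ) :=
  (InnerProductSpace.toDual ℝ (Eu n)).symm.continuous.comp (h.continuous_fderiv one_ne_zero)

lemma stab_max {n : ℕ} {u φ : Eu n → ℝ} (hφ : ContDiff ℝ 1 φ) {x0 : Eu n}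
    (hmax : IsLocalMax (u - φ) x0) :
    ∃ ψ : Eu n → ℝ, ContDiff ℝ 1 ψ ∧ gradient ψ x0 = gradient φ x0 ∧
      ∀ ρ : ℝ, 0 < ρ → ∃ η : ℝ, 0 < η ∧ ∀ w : Eu n → ℝ, Continuous w → (∀ x, |w x - u x| ≤ η) →
        ∃ x1, ‖x1 - x0‖ < ρ ∧ IsLocalMax (w - ψ) x1 := by
  have hcd : ContDiff ℝ 1 (fun z => φ z + 2 / 2 * ‖z - x0‖ ^ 2) := hφ.add (contDiff_sq 2 x0)
  refine ⟨fun z => φ z + 2 / 2 * ‖z - x0‖ ^ 2, hcd, ?_, ?_⟩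
  · have h1 : HasGradientAt (fun z => φ z + 2 / 2 * ‖z - x0‖ ^ 2)
        (gradient φ x0 + (2 : ℝ) • (x0 - x0)) x0 := by
      have e1 := ((hφ.differentiable one_ne_zero) x0).hasGradientAt.hasFDerivAt
      have e2 := (hasGrad_sq 2 x0 x0).hasFDerivAt
      rw [hasGradientAt_iff_hasFDerivAt, map_add]
      exact e1.add e2
    rw [h1.gradient]
    simp
  · intro ρ hρ
    obtain ⟨r, hr, hball⟩ := Metric.eventually_nhds_iff.1 hmax
    set d := min ρ r / 2 with hd
    have hd0 : 0 < d := by positivity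
    have hdρ : d < ρ := by
      have := min_le_left ρ r
      have h0 : 0 < min ρ r := by positivity
      linarith
    have hdr : d < r := by
      have := min_le_right ρ r
      have h0 : 0 < min ρ r := by positivity
      linarith
    refine ⟨d ^ 2 / 4, by positivity, fun w hw hwu => ?_⟩
    obtain ⟨x1, hx1, hm⟩ := (isCompact_closedBall x0 d).exists_isMaxOn
      ⟨x0, Metric.mem_closedBall_self hd0.le⟩ (hw.sub hcd.continuous).continuousOn
    have hx1d : ‖x1 - x0‖ ≤ d := by simpa [dist_eq_norm] using hx1
    have hlt : ‖x1 - x0‖ < d := by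
      rcases lt_or_eq_of_le hx1d with h | h
      · exact h
      · exfalso
        have h1 := hm (Metric.mem_closedBall_self (x := x0) hd0.le)
        simp only [Set.mem_ofPred_eq, Pi.sub_apply, sub_self, norm_zero] at h1
        rw [h] at h1
        have h2 := hball (y := x1) (by rw [dist_eq_norm]; linarith)
        simp only [Pi.sub_apply] at h2
        have h3 := abs_le.1 (hwu x1)
        have h4 := abs_le.1 (hwu x0)
        have h5 : 0 < d ^ 2 := by positivity
        norm_num at h1
        linarith [h3.1, h3.2, h4.1, h4.2]
    refine ⟨x1, hlt.trans hdρ, hm.isLocalMax ?_⟩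
    exact Filter.mem_of_superset (Metric.isOpen_ball.mem_nhds
      (by simpa [dist_eq_norm] using hlt)) Metric.ball_subset_closedBall

lemma stab_min {n : ℕ} {u φ : Eu n → ℝ} (hφ : ContDiff ℝ 1 φ) {x0 : Eu n}
    (hmin : IsLocalMin (u - φ) x0) :
    ∃ ψ : Eu n → ℝ, ContDiff ℝ 1 ψ ∧ gradient ψ x0 = gradient φ x0 ∧
      ∀ ρ : ℝ, 0 < ρ → ∃ η : ℝ, 0 < η ∧ ∀ w : Eu n → ℝ, Continuous w → (∀ x, |w x - u x| ≤ η) →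
        ∃ x1, ‖x1 - x0‖ < ρ ∧ IsLocalMin (w - ψ) x1 := by
  have gneg : ∀ f : Eu n → ℝ, gradient (-f) x0 = - gradient f x0 := by
    intro f
    simp [gradient, fderiv_neg]
  obtain ⟨ψ, h1, h2, h3⟩ := stab_max (u := -u) (φ := -φ) hφ.neg (x0 := x0) (by
    refine hmin.neg.congr (Filter.Eventually.of_forall fun z => ?_)
    simp
    ring)
  refine ⟨-ψ, h1.neg, by rw [gneg, h2, gneg, neg_neg], fun ρ hρ => ?_⟩
  obtain ⟨η, hη, h⟩ := h3 ρ hρ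
  refine ⟨η, hη, fun w hw hwu => ?_⟩
  obtain ⟨x1, hx, hm⟩ := h (-w) hw.neg (fun x => by
    rw [← abs_neg]; convert hwu x using 2; simp; ring)
  refine ⟨x1, hx, hm.neg.congr (Filter.Eventually.of_forall fun z => ?_)⟩
  simp
  ring

lemma small_ev {n : ℕ} {v : ℝ → Eu n → ℝ} {B : ℝ} (hB0 : 0 ≤ B)
    (hB : ∀ ε, 0 < ε → ∀ x, |v ε x| ≤ B) {ρ : ℝ} (hρ : 0 < ρ) :
    ∀ᶠ ε in 𝓝[>] (0 : ℝ), 0 < ε ∧ ∀ x, |ε * v ε x| < ρ := by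
  filter_upwards [Ioo_mem_nhdsGT (show 0 < ρ / (B + 1) by positivity)] with ε hε
  refine ⟨hε.1, fun x => ?_⟩
  rw [abs_mul, abs_of_pos hε.1]
  have h2 := hε.2
  rw [lt_div_iff₀ (by positivity)] at h2
  nlinarith [hB ε hε.1 x, hε.1]

lemma sub_limit {n : ℕ} {G : Eu n → Eu n → ℝ} {f : Eu n → ℝ → ℝ}
    (hGc : Continuous (fun q : Eu n × Eu n => G q.1 q.2))
    (hfc : Continuous (fun q : Eu n × ℝ => f q.1 q.2))
    {v : ℝ → Eu n → ℝ} (hvc : ∀ ε, 0 < ε → Continuous (v ε)) {B : ℝ} (hB0 : 0 ≤ B)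
    (hB : ∀ ε, 0 < ε → ∀ x, |v ε x| ≤ B)
    (hs : ∀ ε, 0 < ε → ViscSub (fun x r p => f x (ε * r) + G x p) (v ε))
    {u : Eu n → ℝ} (hu : ∀ η, 0 < η → ∃ᶠ ε in 𝓝[>] (0:ℝ), ∀ x, |v ε x - u x| ≤ η) :
    ViscSub (fun x _ p => f x 0 + G x p) u := by
  intro φ hφ x0 hmax
  obtain ⟨ψ, hψ, hg, hst⟩ := stab_max hφ hmax
  simp only []
  rw [← hg]
  by_contra hcon
  push Not at hcon
  have hcont : Continuous (fun q : Eu n × ℝ => f q.1 q.2 + G q.1 (gradient ψ q.1)) :=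
    hfc.add (hGc.comp (continuous_fst.prodMk ((grad_continuous hψ).comp continuous_fst)))
  have hev := (hcont.tendsto (x0, 0)).eventually (lt_mem_nhds hcon)
  obtain ⟨ρ, hρ, hball⟩ := Metric.eventually_nhds_iff.1 hev
  obtain ⟨η, hη, hst⟩ := hst ρ hρ
  obtain ⟨ε, h1, h2, h3⟩ := ((hu η hη).and_eventually (small_ev hB0 hB hρ)).exists
  obtain ⟨x1, hx1, hm⟩ := hst _ (hvc ε h2) h1
  have := hs ε h2 ψ hψ x1 hm
  have h4 := hball (y := (x1, ε * v ε x1)) (by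
    rw [Prod.dist_eq, max_lt_iff]
    exact ⟨by simpa [dist_eq_norm] using hx1, by simpa [Real.dist_eq] using h3 x1⟩)
  simp only [] at h4 this
  linarith

lemma super_limit {n : ℕ} {G : Eu n → Eu n → ℝ} {f : Eu n → ℝ → ℝ}
    (hGc : Continuous (fun q : Eu n × Eu n => G q.1 q.2))
    (hfc : Continuous (fun q : Eu n × ℝ => f q.1 q.2))
    {v : ℝ → Eu n → ℝ} (hvc : ∀ ε, 0 < ε → Continuous (v ε)) {B : ℝ} (hB0 : 0 ≤ B)
    (hB : ∀ ε, 0 < ε → ∀ x, |v ε x| ≤ B)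
    (hs : ∀ ε, 0 < ε → ViscSuper (fun x r p => f x (ε * r) + G x p) (v ε))
    {u : Eu n → ℝ} (hu : ∀ η, 0 < η → ∃ᶠ ε in 𝓝[>] (0:ℝ), ∀ x, |v ε x - u x| ≤ η) :
    ViscSuper (fun x _ p => f x 0 + G x p) u := by
  intro φ hφ x0 hmax
  obtain ⟨ψ, hψ, hg, hst⟩ := stab_min hφ hmax
  simp only []
  rw [← hg]
  by_contra hcon
  push Not at hcon
  have hcont : Continuous (fun q : Eu n × ℝ => f q.1 q.2 + G q.1 (gradient ψ q.1)) :=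
    hfc.add (hGc.comp (continuous_fst.prodMk ((grad_continuous hψ).comp continuous_fst)))
  have hev := (hcont.tendsto (x0, 0)).eventually (gt_mem_nhds hcon)
  obtain ⟨ρ, hρ, hball⟩ := Metric.eventually_nhds_iff.1 hev
  obtain ⟨η, hη, hst⟩ := hst ρ hρ
  obtain ⟨ε, h1, h2, h3⟩ := ((hu η hη).and_eventually (small_ev hB0 hB hρ)).exists
  obtain ⟨x1, hx1, hm⟩ := hst _ (hvc ε h2) h1
  have := hs ε h2 ψ hψ x1 hm
  have h4 := hball (y := (x1, ε * v ε x1)) (by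
    rw [Prod.dist_eq, max_lt_iff]
    exact ⟨by simpa [dist_eq_norm] using hx1, by simpa [Real.dist_eq] using h3 x1⟩)
  simp only [] at h4 this
  linarith

lemma net {n : ℕ} {L η : ℝ} (hL : 0 ≤ L) (hη : 0 < η) : ∃ T : Set (Eu n), T.Finite ∧
    ∀ h1 h2 : Eu n → ℝ, ZnPeriodic h1 → ZnPeriodic h2 →
      (∀ x y, h1 y ≤ h1 x + L * ‖y - x‖) → (∀ x y, h2 y ≤ h2 x + L * ‖y - x‖) →
      (∀ t ∈ T, |h1 t - h2 t| < η) → ∀ x, |h1 x - h2 x| ≤ 3 * η := by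
  obtain ⟨Q, hQ, -, hk⟩ := exists_fund n
  obtain ⟨T, hTQ, hT, hcov⟩ := hQ.finite_cover_balls (show 0 < η / (L + 1) by positivity)
  refine ⟨T, hT, fun h1 h2 p1 p2 l1 l2 hclose x => ?_⟩
  obtain ⟨k, hkx⟩ := hk x
  obtain ⟨t, ht, hxt⟩ := mem_iUnion₂.1 (hcov hkx)
  rw [← p1 x k, ← p2 x k]
  change |h1 (x + shiftK k) - h2 (x + shiftK k)| ≤ _
  set y := x + shiftK k
  rw [Metric.mem_ball, dist_eq_norm, lt_div_iff₀ (by positivity)] at hxt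
  have hd : L * ‖y - t‖ ≤ η := by nlinarith [norm_nonneg (y - t)]
  have hd' : L * ‖t - y‖ ≤ η := by rw [norm_sub_rev]; exact hd
  have a := abs_lt.1 (hclose t ht)
  rw [abs_le]
  constructor <;> linarith [l1 t y, l1 y t, l2 t y, l2 y t, a.1, a.2]

lemma taylor {n : ℕ} {f : Eu n → ℝ → ℝ}
    (hf : ContDiff ℝ 2 (fun q : Eu n × ℝ => f q.1 q.2))
    (hfper : ∀ (x : Eu n) (r : ℝ) (k : Fin n → ℤ), f (x + shiftK k) r = f x r)
    (hpos : ∀ (x : Eu n) (r : ℝ), 0 < deriv (f x) r) {B η : ℝ} (hB : 0 ≤ B) (hη : 0 < η) :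
    ∃ ε0 : ℝ, 0 < ε0 ∧ ∀ ε δ, 0 < ε → ε < ε0 → 0 < δ → δ < ε0 → ∀ (z : Eu n) (r r' : ℝ),
      |r| ≤ B → |r'| ≤ B → (f z (ε * r) - f z 0) / ε ≤ (f z (δ * r') - f z 0) / δ → r ≤ r' + η := by
  have hd : ∀ x t, HasDerivAt (f x)
      (fderiv ℝ (fun q : Eu n × ℝ => f q.1 q.2) (x, t) ((0 : Eu n), (1 : ℝ))) t := by
    intro x t
    have h1 := ((hf.differentiable two_ne_zero) (x, t)).hasFDerivAt
    have h2 : HasDerivAt (fun t : ℝ => (x, t)) ((0 : Eu n), (1 : ℝ)) t :=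
      (hasDerivAt_const t x).prodMk (hasDerivAt_id t)
    exact h1.comp_hasDerivAt t h2
  have hdc : Continuous (fun q : Eu n × ℝ => deriv (f q.1) q.2) := by
    have h1 : Continuous (fun q : Eu n × ℝ =>
        fderiv ℝ (fun q : Eu n × ℝ => f q.1 q.2) q ((0 : Eu n), (1 : ℝ))) :=
      (hf.continuous_fderiv two_ne_zero).clm_apply continuous_const
    refine h1.congr fun q => ?_
    rw [(hd q.1 q.2).deriv]
  have hdper : ∀ (x : Eu n) (r : ℝ) (k : Fin n → ℤ),
      deriv (f (x + shiftK k)) r = deriv (f x) r := by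
    intro x r k
    congr 1
    funext t
    exact hfper x t k
  obtain ⟨Q, hQ, hQn, hk⟩ := exists_fund n
  have hd0 : Continuous (fun x => deriv (f x) 0) := hdc.comp (Continuous.prodMk_left (0:ℝ))
  obtain ⟨q, hq, hqm⟩ := hQ.exists_isMinOn hQn hd0.continuousOn
  set a := deriv (f q) 0 with ha
  have ha0 : 0 < a := hpos q 0
  have hamin : ∀ x, a ≤ deriv (f x) 0 := by
    intro x
    obtain ⟨k, hkx⟩ := hk x
    have := hqm hkx
    simp only [Set.mem_ofPred_eq] at this
    rwa [hdper] at this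
  set κ := a * η / (2 * (B + 1)) with hκ
  have hκ0 : 0 < κ := by positivity
  have hunif : ∀ᶠ θ in 𝓝 (0:ℝ), ∀ x ∈ Q, |deriv (f x) θ - deriv (f x) 0| < κ := by
    refine hQ.eventually_forall_of_forall_eventually fun x hx => ?_
    have hc : Continuous (fun p : ℝ × Eu n => |deriv (f p.2) p.1 - deriv (f p.2) 0|) :=
      ((hdc.comp (continuous_snd.prodMk continuous_fst)).sub (hd0.comp continuous_snd)).abs
    exact Filter.Tendsto.eventually_lt_const (u := κ) (by simpa using hκ0) (hc.tendsto (0, x))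
  obtain ⟨ρ, hρ, hρu⟩ := Metric.eventually_nhds_iff.1 hunif
  have hunif' : ∀ x θ, |θ| < ρ → |deriv (f x) θ - deriv (f x) 0| ≤ κ := by
    intro x θ hθ
    obtain ⟨k, hkx⟩ := hk x
    have := hρu (y := θ) (by simpa [Real.dist_eq] using hθ) _ hkx
    rw [hdper, hdper] at this
    exact this.le
  -- first order expansion
  have hexp : ∀ ε, 0 < ε → ε < ρ / (B + 1) → ∀ (z : Eu n) (r : ℝ), |r| ≤ B →
      |(f z (ε * r) - f z 0) / ε - deriv (f z) 0 * r| ≤ κ * B := by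
    intro ε hε hε0 z r hr
    rw [lt_div_iff₀ (by positivity)] at hε0
    have hsmall : |ε * r| < ρ := by
      rw [abs_mul, abs_of_pos hε]
      nlinarith
    have hmv := (convex_ball (0:ℝ) ρ).norm_image_sub_le_of_norm_hasDerivWithin_le
      (f := fun t => f z t - deriv (f z) 0 * t) (f' := fun t => deriv (f z) t - deriv (f z) 0)
      (C := κ) (x := 0) (y := ε * r)
      (fun t _ => by
        have h1 := (hd z t).sub ((hasDerivAt_id t).const_mul (deriv (f z) 0))
        rw [mul_one, ← (hd z t).deriv] at h1
        exact h1.hasDerivWithinAt)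
      (fun t ht => hunif' z t (by simpa using ht))
      (by simpa using hρ) (by simpa using hsmall)
    simp only [mul_zero, sub_zero, Real.norm_eq_abs] at hmv
    have e1 : (f z (ε * r) - f z 0) / ε - deriv (f z) 0 * r =
        (f z (ε * r) - deriv (f z) 0 * (ε * r) - f z 0) / ε := by
      field_simp
      ring
    rw [e1, abs_div, abs_of_pos hε, div_le_iff₀ hε]
    refine hmv.trans ?_
    rw [abs_mul, abs_of_pos hε]
    have : κ * (ε * |r|) ≤ κ * (ε * B) := by gcongr
    linarith
  refine ⟨ρ / (B + 1), by positivity, fun ε δ hε hε0 hδ hδ0 z r r' hr hr' hle => ?_⟩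
  have b1 := abs_le.1 (hexp ε hε hε0 z r hr)
  have b2 := abs_le.1 (hexp δ hδ hδ0 z r' hr')
  have b3 : 2 * (κ * B) ≤ a * η := by
    rw [hκ]
    calc 2 * (a * η / (2 * (B + 1)) * B) = a * η * (B / (B + 1)) := by field_simp
      _ ≤ a * η * 1 := by
        gcongr
        rw [div_le_one (by positivity)]
        linarith
      _ = a * η := mul_one _
  have b4 : a * η ≤ deriv (f z) 0 * η := by gcongr; exact hamin z
  have b5 : deriv (f z) 0 * r ≤ deriv (f z) 0 * (r' + η) := by
    linarith [b1.1, b2.2]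
  exact le_of_mul_le_mul_left b5 (hpos z 0)

theorem stmt0 {n : ℕ}
    (G : EuclideanSpace ℝ (Fin n) → EuclideanSpace ℝ (Fin n) → ℝ)
    (f : EuclideanSpace ℝ (Fin n) → ℝ → ℝ)
    -- G ∈ C¹(𝕋ⁿ × ℝⁿ)
    (hGsmooth : ContDiff ℝ 1 (fun q : EuclideanSpace ℝ (Fin n) × EuclideanSpace ℝ (Fin n) => G q.1 q.2))
    (hGper : ∀ (x p : EuclideanSpace ℝ (Fin n)) (k : Fin n → ℤ),
      G (x + (EuclideanSpace.equiv (Fin n) ℝ).symm (fun i => (k i : ℝ))) p = G x p)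
    -- f ∈ C²(𝕋ⁿ × ℝ)
    (hfsmooth : ContDiff ℝ 2 (fun q : EuclideanSpace ℝ (Fin n) × ℝ => f q.1 q.2))
    (hfper : ∀ (x : EuclideanSpace ℝ (Fin n)) (r : ℝ) (k : Fin n → ℤ),
      f (x + (EuclideanSpace.equiv (Fin n) ℝ).symm (fun i => (k i : ℝ))) r = f x r)
    -- (A1)
    (hA1 : ∀ C : ℝ, ∃ R : ℝ, ∀ (x p : EuclideanSpace ℝ (Fin n)), R ≤ ‖p‖ →
      C ≤ (G x p) ^ 2 / (2 * ‖p‖) - ‖fderiv ℝ (fun y => G y p) x‖)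
    -- (A2)
    (hA2 : ∀ x : EuclideanSpace ℝ (Fin n), ConvexOn ℝ Set.univ (G x))
    -- (A3)
    (hA3pos : ∀ (x : EuclideanSpace ℝ (Fin n)) (r : ℝ), 0 < deriv (f x) r)
    (hA3M : ∃ M : ℝ, 0 < M ∧ ∀ x : EuclideanSpace ℝ (Fin n),
      f x (-M) ≤ -G x 0 ∧ -G x 0 ≤ f x M)
    -- the ergodic equation f(x,0) + G(x,Du) = 0 has a continuous viscosity solution
    (hErg : ∃ u : EuclideanSpace ℝ (Fin n) → ℝ, Continuous u ∧ ZnPeriodic u ∧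
      ViscSol (fun x _ p => f x 0 + G x p) u)
    -- for each ε > 0, v ε is a continuous viscosity solution of f(x, ε vᵉ) + G(x, Dvᵉ) = 0
    (v : ℝ → EuclideanSpace ℝ (Fin n) → ℝ)
    (hv : ∀ ε : ℝ, 0 < ε → Continuous (v ε) ∧ ZnPeriodic (v ε) ∧
      ViscSol (fun x r p => f x (ε * r) + G x p) (v ε)) :
    ∃ v0 : EuclideanSpace ℝ (Fin n) → ℝ, Continuous v0 ∧ ZnPeriodic v0 ∧
      TendstoUniformly v v0 (𝓝[>] (0 : ℝ)) ∧
      ViscSol (fun x _ p => f x 0 + G x p) v0 := by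
  have hGc : Continuous (fun q : Eu n × Eu n => G q.1 q.2) := hGsmooth.continuous
  have hfc : Continuous (fun q : Eu n × ℝ => f q.1 q.2) := hfsmooth.continuous
  have hfcomp : ∀ (w : Eu n → ℝ), Continuous w → Continuous (fun x => f x (w x)) := fun w hw =>
    hfc.comp (continuous_id.prodMk hw)
  have hfmono : ∀ x, StrictMono (f x) := fun x => strictMono_of_deriv_pos (hA3pos x)
  have hLip := lip_all hGc hGper hA2 hA1
  -- Lipschitz bound for solutions
  have hLipSol : ∀ C : ℝ, ∃ K : ℝ, 0 ≤ K ∧ ∀ (g u : Eu n → ℝ), Continuous u → ZnPeriodic u →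
      (∀ x, |g x| ≤ C) → ViscSol (fun x _ p => g x + G x p) u →
      ∀ x y, u y ≤ u x + K * ‖y - x‖ := by
    intro C
    obtain ⟨K, hK, h⟩ := hLip C
    refine ⟨K, hK, fun g u hc hp hg hsol => h u hc hp ?_ ?_⟩
    · intro φ hφ x0 hm
      have h1 := hsol.1 φ hφ x0 hm
      have h2 := (abs_le.1 (hg x0)).1
      simp only [] at h1
      linarith
    · intro φ hφ x0 hm
      have h1 := hsol.2 φ hφ x0 hm
      have h2 := (abs_le.1 (hg x0)).2
      simp only [] at h1
      linarith
  have hvc : ∀ ε, 0 < ε → Continuous (v ε) := fun ε h => (hv ε h).1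
  have hvp : ∀ ε, 0 < ε → ZnPeriodic (v ε) := fun ε h => (hv ε h).2.1
  have hvsub : ∀ ε, 0 < ε → ViscSub (fun x r p => f x (ε * r) + G x p) (v ε) :=
    fun ε h => (hv ε h).2.2.1
  have hvsup : ∀ ε, 0 < ε → ViscSuper (fun x r p => f x (ε * r) + G x p) (v ε) :=
    fun ε h => (hv ε h).2.2.2
  have hvsub' : ∀ ε, 0 < ε → ViscSub (fun x _ p => f x (ε * v ε x) + G x p) (v ε) :=
    fun ε h => hvsub ε h
  have hvsup' : ∀ ε, 0 < ε → ViscSuper (fun x _ p => f x (ε * v ε x) + G x p) (v ε) :=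
    fun ε h => hvsup ε h
  have hgc : ∀ ε, 0 < ε → Continuous (fun x => f x (ε * v ε x)) := fun ε h =>
    hfcomp _ (continuous_const.mul (hvc ε h))
  have hgp : ∀ ε, 0 < ε → ZnPeriodic (fun x => f x (ε * v ε x)) := by
    intro ε h x k
    simp only []
    rw [hvp ε h x k, hfper]
  have hf0c : Continuous (fun x => f x 0) := hfcomp _ continuous_const
  have hf0p : ZnPeriodic (fun x => f x 0) := fun x k => hfper x 0 k
  -- uniform bound
  obtain ⟨u, huc, hup, hus⟩ := hErg
  obtain ⟨U, hU0, hU⟩ := per_bounded huc hup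
  have huL : ∃ K : ℝ, 0 ≤ K ∧ ∀ x y, u y ≤ u x + K * ‖y - x‖ := by
    obtain ⟨C, -, hC⟩ := per_bounded hf0c hf0p
    obtain ⟨K, hK, h⟩ := hLipSol C
    exact ⟨K, hK, h _ u huc hup hC hus⟩
  have hvL : ∀ ε, 0 < ε → ∃ K : ℝ, 0 ≤ K ∧ ∀ x y, v ε y ≤ v ε x + K * ‖y - x‖ := by
    intro ε hε
    obtain ⟨C, -, hC⟩ := per_bounded (hgc ε hε) (hgp ε hε)
    obtain ⟨K, hK, h⟩ := hLipSol C
    exact ⟨K, hK, h _ (v ε) (hvc ε hε) (hvp ε hε) hC ⟨hvsub' ε hε, hvsup' ε hε⟩⟩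
  have hB0 : 0 ≤ 2 * U := by linarith
  have hB : ∀ ε, 0 < ε → ∀ x, |v ε x| ≤ 2 * U := by
    intro ε hε x
    rw [abs_le]
    constructor
    · obtain ⟨K, hK, hKu⟩ := huL
      obtain ⟨z, hz1, hz2⟩ := doubling hGc hA2 hf0c hf0c (hgc ε hε) huc huc (hvc ε hε)
        hup hup (hvp ε hε) hK hKu hKu hus.1 hus.1 (hvsup' ε hε) (s := 1 / 2) (by norm_num) (by norm_num)
      have h1 : f z 0 ≤ f z (ε * v ε z) := by linarith
      have h2 : 0 ≤ v ε z := by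
        have := (hfmono z).le_iff_le.1 h1
        exact nonneg_of_mul_nonneg_right this hε
      have := hz1 x
      linarith [(abs_le.1 (hU x)).1, (abs_le.1 (hU z)).2]
    · obtain ⟨K, hK, hKu⟩ := hvL ε hε
      obtain ⟨z, hz1, hz2⟩ := doubling hGc hA2 (hgc ε hε) (hgc ε hε) hf0c (hvc ε hε) (hvc ε hε) huc
        (hvp ε hε) (hvp ε hε) hup hK hKu hKu (hvsub' ε hε) (hvsub' ε hε) hus.2 (s := 1 / 2)
        (by norm_num) (by norm_num)
      have h1 : f z (ε * v ε z) ≤ f z 0 := by linarith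
      have h2 : v ε z ≤ 0 := by
        have := (hfmono z).le_iff_le.1 h1
        exact nonpos_of_mul_nonpos_right this hε
      have := hz1 x
      linarith [(abs_le.1 (hU x)).2, (abs_le.1 (hU z)).1]
  set B := 2 * U with hBdef
  -- equi-Lipschitz
  obtain ⟨K, hK, hvK⟩ : ∃ K : ℝ, 0 ≤ K ∧ ∀ ε, 0 < ε → ε < 1 →
      ∀ x y, v ε y ≤ v ε x + K * ‖y - x‖ := by
    obtain ⟨C1, -, hC1⟩ := per_bounded (hfcomp _ (continuous_const (y := B))) (fun x k => hfper x B k)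
    obtain ⟨C2, -, hC2⟩ := per_bounded (hfcomp _ (continuous_const (y := -B))) (fun x k => hfper x (-B) k)
    obtain ⟨K, hK, h⟩ := hLipSol (max C1 C2)
    refine ⟨K, hK, fun ε hε hε1 => h _ (v ε) (hvc ε hε) (hvp ε hε) (fun x => ?_)
      ⟨hvsub' ε hε, hvsup' ε hε⟩⟩
    have hb : |ε * v ε x| ≤ B := by
      rw [abs_mul, abs_of_pos hε]
      nlinarith [hB ε hε x, abs_nonneg (v ε x)]
    have hb' := abs_le.1 hb
    have m1 := (hfmono x).monotone hb'.1
    have m2 := (hfmono x).monotone hb'.2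
    have c1 := (abs_le.1 (hC1 x)).2
    have c2 := (abs_le.1 (hC2 x)).1
    have d1 := le_max_left C1 C2
    have d2 := le_max_right C1 C2
    rw [abs_le]
    constructor <;> linarith
  have hpos_ev : ∀ᶠ ε in 𝓝[>] (0:ℝ), 0 < ε ∧ ε < 1 := Ioo_mem_nhdsGT one_pos
  -- cluster points
  have hclus : ∀ h : Eu n → ℝ, MapClusterPt h (𝓝[>] (0:ℝ)) v →
      ZnPeriodic h ∧ (∀ x y, h y ≤ h x + K * ‖y - x‖) ∧
      (∀ η, 0 < η → ∃ᶠ ε in 𝓝[>] (0:ℝ), ∀ x, |v ε x - h x| ≤ η) := by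
    intro h hh
    have ev : ∀ x : Eu n, Continuous (fun w : Eu n → ℝ => w x) := fun x => continuous_apply x
    have hper : ZnPeriodic h := by
      intro x k
      have hcl : IsClosed {w : Eu n → ℝ | w (x + shiftK k) = w x} := isClosed_eq (ev _) (ev _)
      exact hcl.mem_of_mapClusterPt hh (hpos_ev.mono fun ε hε => hvp ε hε.1 x k)
    have hlip : ∀ x y, h y ≤ h x + K * ‖y - x‖ := by
      intro x y
      have hcl : IsClosed {w : Eu n → ℝ | w y ≤ w x + K * ‖y - x‖} :=
        isClosed_le (ev _) ((ev _).add continuous_const)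
      exact hcl.mem_of_mapClusterPt hh (hpos_ev.mono fun ε hε => hvK ε hε.1 hε.2 x y)
    refine ⟨hper, hlip, fun η hη => ?_⟩
    obtain ⟨T, hT, hnet⟩ := net (n := n) hK (show 0 < η / 3 by positivity)
    have hnh : ∀ᶠ w in 𝓝 h, ∀ t ∈ T, |w t - h t| < η / 3 := by
      rw [Filter.eventually_all_finite hT]
      intro t _
      have hc : Continuous (fun w : Eu n → ℝ => |w t - h t|) := ((ev t).sub continuous_const).abs
      exact Filter.Tendsto.eventually_lt_const (u := η / 3) (by simpa using hη) (hc.tendsto h)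
    refine ((hh.frequently hnh).and_eventually hpos_ev).mono fun ε hε x => ?_
    have := hnet (v ε) h (hvp ε hε.2.1) hper (hvK ε hε.2.1 hε.2.2) hlip hε.1 x
    linarith
  have hlipcont : ∀ h : Eu n → ℝ, (∀ x y, h y ≤ h x + K * ‖y - x‖) → Continuous h := by
    intro h hl
    refine (LipschitzWith.of_dist_le_mul (K := K.toNNReal) fun x y => ?_).continuous
    rw [Real.dist_eq, dist_eq_norm, abs_le]
    have h1 := hl x y
    have h2 := hl y x
    rw [norm_sub_rev] at h1
    rw [Real.coe_toNNReal K hK]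
    constructor <;> linarith
  -- key inequality
  have hkey : ∀ h : Eu n → ℝ, MapClusterPt h (𝓝[>] (0:ℝ)) v → ∀ η, 0 < η →
      ∀ᶠ δ in 𝓝[>] (0:ℝ), ∀ x, h x ≤ v δ x + η := by
    intro h hh η hη
    obtain ⟨hper, hlip, hfreq⟩ := hclus h hh
    have hsub := sub_limit hGc hfc hvc hB0 hB hvsub hfreq
    obtain ⟨ε0, hε0, htay⟩ := taylor hfsmooth hfper hA3pos hB0 (show 0 < η / 4 by positivity)
    obtain ⟨ε, hεc, hε, hε1⟩ := ((hfreq (η / 4) (by positivity)).and_eventually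
      (show ∀ᶠ ε in 𝓝[>] (0:ℝ), 0 < ε ∧ ε < min ε0 1 from
        Ioo_mem_nhdsGT (by positivity))).exists
    have hεε0 := hε1.trans_le (min_le_left _ _)
    have hε11 := hε1.trans_le (min_le_right _ _)
    filter_upwards [Ioo_mem_nhdsGT hε] with δ hδ x
    obtain ⟨hδ0, hδε⟩ := hδ
    have hs0 : 0 < δ / ε := by positivity
    have hs1 : δ / ε < 1 := (div_lt_one hε).2 hδε
    obtain ⟨z, hz1, hz2⟩ := doubling hGc hA2 hf0c (hgc ε hε) (hgc δ hδ0) (hlipcont h hlip) (hvc ε hε)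
      (hvc δ hδ0) hper (hvp ε hε) (hvp δ hδ0) hK hlip (hvK ε hε hε11) hsub (hvsub' ε hε)
      (hvsup' δ hδ0) hs0 hs1
    have hle : (f z (ε * v ε z) - f z 0) / ε ≤ (f z (δ * v δ z) - f z 0) / δ := by
      rw [le_div_iff₀ hδ0]
      have : (f z (ε * v ε z) - f z 0) / ε * δ = δ / ε * (f z (ε * v ε z) - f z 0) := by ring
      rw [this]
      linarith
    have ht := htay ε δ hε hεε0 hδ0 (hδε.trans hεε0) z _ _ (hB ε hε z) (hB δ hδ0 z) hle
    have hx := hz1 x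
    have a1 := abs_le.1 (hεc x)
    have a2 := abs_le.1 (hεc z)
    set s := δ / ε
    have b1 : s * (h x - v ε x) ≤ η / 4 := by nlinarith [a1.1, a1.2]
    have b2 : (1 - s) * (h z - v ε z) ≤ η / 4 := by nlinarith [a2.1, a2.2]
    linarith
  -- compactness
  have hScomp : IsCompact (Set.pi univ (fun _ : Eu n => Icc (-B) B)) :=
    isCompact_univ_pi fun _ => isCompact_Icc
  have hmem : ∀ᶠ ε in 𝓝[>] (0:ℝ), v ε ∈ Set.pi univ (fun _ : Eu n => Icc (-B) B) :=
    hpos_ev.mono fun ε hε x _ => abs_le.1 (hB ε hε.1 x)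
  obtain ⟨v0, -, hv0⟩ := hScomp.exists_mapClusterPt (f := 𝓝[>] (0:ℝ)) (u := v)
    (by rw [Filter.le_principal_iff]; exact hmem)
  have hord : ∀ h1 h2 : Eu n → ℝ, MapClusterPt h1 (𝓝[>] (0:ℝ)) v → MapClusterPt h2 (𝓝[>] (0:ℝ)) v →
      ∀ x, h1 x ≤ h2 x := by
    intro h1 h2 c1 c2 x
    refine le_of_forall_pos_le_add fun η hη => ?_
    obtain ⟨ε, he1, he2⟩ := (((hclus h2 c2).2.2 (η / 2) (by positivity)).and_eventually
      (hkey h1 c1 (η / 2) (by positivity))).exists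
    have := (abs_le.1 (he1 x)).2
    have := he2 x
    linarith
  obtain ⟨hper, hlip, hfreq⟩ := hclus v0 hv0
  have htend : Tendsto v (𝓝[>] (0:ℝ)) (𝓝 v0) :=
    hScomp.tendsto_nhds_of_unique_mapClusterPt hmem fun h _ hc => by
      funext x
      exact le_antisymm (hord _ _ hc hv0 x) (hord _ _ hv0 hc x)
  refine ⟨v0, hlipcont v0 hlip, hper, ?_, sub_limit hGc hfc hvc hB0 hB hvsub hfreq,
    super_limit hGc hfc hvc hB0 hB hvsup hfreq⟩
  rw [Metric.tendstoUniformly_iff]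
  intro η hη
  obtain ⟨T, hT, hnet⟩ := net (n := n) hK (show 0 < η / 6 by positivity)
  have hnh : ∀ᶠ w in 𝓝 v0, ∀ t ∈ T, |w t - v0 t| < η / 6 := by
    rw [Filter.eventually_all_finite hT]
    intro t _
    have hc : Continuous (fun w : Eu n → ℝ => |w t - v0 t|) :=
      ((continuous_apply t).sub continuous_const).abs
    exact Filter.Tendsto.eventually_lt_const (u := η / 6) (by simpa using hη) (hc.tendsto v0)
  filter_upwards [htend.eventually hnh, hpos_ev] with ε h1 h2 x
  have := hnet (v ε) v0 (hvp ε h2.1) hper (hvK ε h2.1 h2.2) hlip h1 x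
  rw [dist_comm, Real.dist_eq]
  linarith
end
end

section
/- Let H ∈ C²(𝕋ⁿ × ℝⁿ) be coercive (H(x,p) → +∞ as |p| → ∞ uniformly in x) and satisfy (A4) and (A5), and assume the ergodic equation H(x,Du(x)) = 0 on 𝕋ⁿ admits a continuous viscosity solution (normalization H̄ = 0). For each ε > 0 let u^ε be a continuous viscosity solution of ε u^ε(x) + H(x, Du^ε(x)) = 0 on 𝕋ⁿ. Then there exists a continuous function u⁰ on 𝕋ⁿ such that u^ε converges uniformly on 𝕋ⁿ to u⁰ as ε → 0⁺, and u⁰ is a viscosity solution of H(x,Du⁰(x)) = 0 on 𝕋ⁿ. -/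
open Filter Set
open scoped Topology

noncomputable section

/-- Shorthand for the integer lattice vectors. -/
def latv {n : ℕ} (k : Fin n → ℤ) : EuclideanSpace ℝ (Fin n) :=
  (EuclideanSpace.equiv (Fin n) ℝ).symm (fun i => (k i : ℝ))

lemma exists_latv (n : ℕ) : ∃ R : ℝ, 0 ≤ R ∧ ∀ x : EuclideanSpace ℝ (Fin n),
    ∃ k : Fin n → ℤ, ‖x + latv k‖ ≤ R := by
  refine ⟨Real.sqrt n, Real.sqrt_nonneg _, fun x => ⟨fun i => -⌊x i⌋, ?_⟩⟩
  rw [EuclideanSpace.norm_eq]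
  apply Real.sqrt_le_sqrt
  calc ∑ i, ‖(x + latv fun i => -⌊x i⌋) i‖ ^ 2 ≤ ∑ i : Fin n, (1:ℝ) := by
        apply Finset.sum_le_sum
        intro i _
        have h1 : (x + latv fun i => -⌊x i⌋) i = Int.fract (x i) := by
          simp [latv, Int.fract, sub_eq_add_neg]
        rw [h1, Real.norm_eq_abs, sq_abs]
        have := Int.fract_nonneg (x i)
        have := (Int.fract_lt_one (x i)).le
        nlinarith
    _ = n := by simp

lemma per_bdd {n : ℕ} {u : EuclideanSpace ℝ (Fin n) → ℝ} (hc : Continuous u)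
    (hp : ZnPeriodic u) : ∃ B : ℝ, 0 ≤ B ∧ ∀ x, |u x| ≤ B := by
  obtain ⟨R, hR, hk⟩ := exists_latv n
  obtain ⟨B, hB⟩ := (isCompact_closedBall (0 : EuclideanSpace ℝ (Fin n)) R).exists_bound_of_continuousOn
    hc.continuousOn
  refine ⟨B, (norm_nonneg _).trans (hB 0 (by simpa using hR)), fun x => ?_⟩
  obtain ⟨k, hk⟩ := hk x
  rw [← hp x k]
  exact hB _ (by rw [mem_closedBall_zero_iff]; exact hk)

lemma grad_quad {n : ℕ} (α : ℝ) (z x : EuclideanSpace ℝ (Fin n)) :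
    HasGradientAt (fun x => α * ‖x - z‖ ^ 2) ((2 * α) • (x - z)) x := by
  rw [hasGradientAt_iff_hasFDerivAt]
  have h := (((hasFDerivAt_id (𝕜 := ℝ) x).sub_const z).norm_sq).const_mul α
  refine h.congr_fderiv ?_
  ext v
  simp
  ring

lemma contDiff_quad {n : ℕ} (α : ℝ) (z : EuclideanSpace ℝ (Fin n)) :
    ContDiff ℝ 1 (fun x => α * ‖x - z‖ ^ 2) :=
  contDiff_const.mul ((contDiff_id.sub contDiff_const).norm_sq ℝ)

/-- Tripling of variables. -/
lemma triple {n : ℕ} {H : EuclideanSpace ℝ (Fin n) → EuclideanSpace ℝ (Fin n) → ℝ}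
    {w a s : EuclideanSpace ℝ (Fin n) → ℝ}
    (cw : Continuous w) (pw : ZnPeriodic w) (ca : Continuous a) (pa : ZnPeriodic a)
    (cs : Continuous s) (ps : ZnPeriodic s) {c1 c2 c3 : ℝ}
    (hw : ViscSub (fun x r p => c1 * r + H x p) w)
    (ha : ViscSub (fun x r p => c2 * r + H x p) a)
    (hs : ViscSuper (fun x r p => c3 * r + H x p) s)
    {t : ℝ} (ht0 : 0 < t) (ht1 : t < 1) {Q : ℝ} (hQ0 : 0 ≤ Q)
    (hQ : ∀ x : EuclideanSpace ℝ (Fin n), ∃ k : Fin n → ℤ, ‖x + latv k‖ ≤ Q)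
    {α : ℝ} (hα : 0 < α) :
    ∃ z h l : EuclideanSpace ℝ (Fin n), ‖z‖ ≤ Q ∧
      (∀ X, (1 - t) * w X + t * a X - s X ≤ (1 - t) * w (z + h) + t * a (z + l) - s z) ∧
      c1 * w (z + h) + H (z + h) ((2 * α) • h) ≤ 0 ∧
      c2 * a (z + l) + H (z + l) ((2 * α) • l) ≤ 0 ∧
      0 ≤ c3 * s z + H z ((1 - t) • (2 * α) • h + t • (2 * α) • l) := by
  obtain ⟨B1, hB1, hwB⟩ := per_bdd cw pw
  obtain ⟨B2, hB2, haB⟩ := per_bdd ca pa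
  obtain ⟨B3, hB3, hsB⟩ := per_bdd cs ps
  let Ψ : EuclideanSpace ℝ (Fin n) → EuclideanSpace ℝ (Fin n) → EuclideanSpace ℝ (Fin n) → ℝ :=
    fun z h l => (1 - t) * w (z + h) + t * a (z + l) - s z - (1 - t) * (α * ‖h‖ ^ 2)
      - t * (α * ‖l‖ ^ 2)
  obtain ⟨B, hB, hB1', hB2', hB3'⟩ : ∃ B, 0 ≤ B ∧ B1 ≤ B ∧ B2 ≤ B ∧ B3 ≤ B :=
    ⟨B1 + B2 + B3, by positivity, by linarith, by linarith, by linarith⟩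
  set m := min t (1 - t) with hm
  have hm0 : 0 < m := lt_min ht0 (by linarith)
  have hmt : m ≤ t := min_le_left _ _
  have hmt' : m ≤ 1 - t := min_le_right _ _
  set ρ := Real.sqrt (4 * B / (α * m)) with hρ
  have hρ0 : 0 ≤ ρ := Real.sqrt_nonneg _
  have hρ2 : α * m * ρ ^ 2 = 4 * B := by
    rw [hρ, Real.sq_sqrt (by positivity)]
    field_simp
  have hwB' : ∀ x, -B ≤ w x ∧ w x ≤ B := fun x => abs_le.1 ((hwB x).trans hB1')
  have haB' : ∀ x, -B ≤ a x ∧ a x ≤ B := fun x => abs_le.1 ((haB x).trans hB2')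
  have hsB' : ∀ x, -B ≤ s x ∧ s x ≤ B := fun x => abs_le.1 ((hsB x).trans hB3')
  have hcont : Continuous (fun q : EuclideanSpace ℝ (Fin n) × EuclideanSpace ℝ (Fin n) ×
      EuclideanSpace ℝ (Fin n) => Ψ q.1 q.2.1 q.2.2) := by
    simp only [Ψ]
    fun_prop
  obtain ⟨⟨z, h, l⟩, hmem, hmax⟩ := ((isCompact_closedBall (0 : EuclideanSpace ℝ (Fin n)) Q).prod
    ((isCompact_closedBall (0 : EuclideanSpace ℝ (Fin n)) ρ).prod
    (isCompact_closedBall (0 : EuclideanSpace ℝ (Fin n)) ρ))).exists_isMaxOn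
    ⟨(0, 0, 0), by simp [hQ0, hρ0]⟩ hcont.continuousOn
  have hz : ‖z‖ ≤ Q := by simpa using hmem.1
  have hsmall : ∀ z' h' l', ‖h'‖ ≤ ρ → ‖l'‖ ≤ ρ → Ψ z' h' l' ≤ Ψ z h l := by
    intro z' h' l' hh hl
    obtain ⟨k, hk⟩ := hQ z'
    have e : Ψ z' h' l' = Ψ (z' + latv k) h' l' := by
      have e1 := pw (z' + h') k
      have e2 := pa (z' + l') k
      have e3 := ps z' k
      rw [add_right_comm] at e1 e2
      simp only [Ψ, latv]
      rw [e1, e2, e3]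
    rw [e]
    exact isMaxOn_iff.1 hmax (z' + latv k, h', l') ⟨mem_closedBall_zero_iff.2 hk,
      mem_closedBall_zero_iff.2 hh, mem_closedBall_zero_iff.2 hl⟩
  have h00 : ∀ z', -(2 * B) ≤ Ψ z' 0 0 := by
    intro z'
    simp only [Ψ, add_zero, norm_zero]
    have h1 := (hwB' z').1
    have h2 := (haB' z').1
    have h3 := (hsB' z').2
    nlinarith [mul_le_mul_of_nonneg_left h1 (by linarith : 0 ≤ 1 - t),
      mul_le_mul_of_nonneg_left h2 ht0.le]
  have hub : ∀ z' h' l', Ψ z' h' l' ≤ 2 * B - (1 - t) * (α * ‖h'‖ ^ 2) - t * (α * ‖l'‖ ^ 2) := by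
    intro z' h' l'
    simp only [Ψ]
    have h1 := (hwB' (z' + h')).2
    have h2 := (haB' (z' + l')).2
    have h3 := (hsB' z').1
    nlinarith [mul_le_mul_of_nonneg_left h1 (by linarith : 0 ≤ 1 - t),
      mul_le_mul_of_nonneg_left h2 ht0.le]
  have hbig : ∀ r : ℝ, ρ < r → ∀ c, m ≤ c → 4 * B ≤ c * (α * r ^ 2) := by
    intro r hr c hc
    have h1 : ρ ^ 2 ≤ r ^ 2 := by gcongr
    have h2 : 0 ≤ c := hm0.le.trans hc
    calc 4 * B = m * (α * ρ ^ 2) := by rw [← hρ2]; ring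
      _ ≤ c * (α * r ^ 2) := by gcongr
  have hglob : ∀ z' h' l', Ψ z' h' l' ≤ Ψ z h l := by
    intro z' h' l'
    by_cases hh : ‖h'‖ ≤ ρ
    · by_cases hl : ‖l'‖ ≤ ρ
      · exact hsmall _ _ _ hh hl
      · have h1 := hbig _ (not_le.1 hl) t hmt
        have h2 := hub z' h' l'
        have h3 := h00 z'
        have h4 := hsmall z' 0 0 (by simpa) (by simpa)
        have h5 : 0 ≤ (1 - t) * (α * ‖h'‖ ^ 2) := mul_nonneg (by linarith) (by positivity)
        linarith
    · have h1 := hbig _ (not_le.1 hh) (1 - t) hmt'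
      have h2 := hub z' h' l'
      have h3 := h00 z'
      have h4 := hsmall z' 0 0 (by simpa) (by simpa)
      have h5 : 0 ≤ t * (α * ‖l'‖ ^ 2) := by positivity
      linarith
  refine ⟨z, h, l, hz, ?_, ?_, ?_, ?_⟩
  · intro X
    have h1 := hglob X 0 0
    have h5 : 0 ≤ (1 - t) * (α * ‖h‖ ^ 2) := mul_nonneg (by linarith) (by positivity)
    have h6 : 0 ≤ t * (α * ‖l‖ ^ 2) := by positivity
    simp only [Ψ, add_zero, norm_zero] at h1
    norm_num at h1
    linarith
  · have := hw _ (contDiff_quad α z) (z + h) (Eventually.of_forall fun X => ?_)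
    · rwa [(grad_quad α z (z + h)).gradient, add_sub_cancel_left] at this
    · have h1 := hglob z (X - z) l
      simp only [Ψ, add_sub_cancel] at h1
      simp only [Pi.sub_apply, add_sub_cancel_left]
      have : (1 - t) * (w X - α * ‖X - z‖ ^ 2) ≤ (1 - t) * (w (z + h) - α * ‖h‖ ^ 2) := by linarith
      exact le_of_mul_le_mul_left this (by linarith)
  · have := ha _ (contDiff_quad α z) (z + l) (Eventually.of_forall fun X => ?_)
    · rwa [(grad_quad α z (z + l)).gradient, add_sub_cancel_left] at this
    · have h1 := hglob z h (X - z)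
      simp only [Ψ, add_sub_cancel] at h1
      simp only [Pi.sub_apply, add_sub_cancel_left]
      have : t * (a X - α * ‖X - z‖ ^ 2) ≤ t * (a (z + l) - α * ‖l‖ ^ 2) := by linarith
      exact le_of_mul_le_mul_left this ht0
  · have hcd := (contDiff_quad (-(1 - t) * α) (z + h)).add (contDiff_quad (-t * α) (z + l))
    have hg := (grad_quad (-(1 - t) * α) (z + h) z)
    have hg2 := (grad_quad (-t * α) (z + l) z)
    have hg3 : HasGradientAt (fun x => -(1 - t) * α * ‖x - (z + h)‖ ^ 2
        + -t * α * ‖x - (z + l)‖ ^ 2)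
        ((1 - t) • (2 * α) • h + t • (2 * α) • l) z := by
      rw [hasGradientAt_iff_hasFDerivAt] at *
      refine (hg.add hg2).congr_fderiv ?_
      rw [← map_add]
      congr 1
      simp only [smul_smul, sub_add_cancel_left, smul_neg, ← neg_smul]
      congr 2 <;> ring
    have := hs _ hcd z (Eventually.of_forall fun X => ?_)
    · rwa [hg3.gradient] at this
    · have h1 := hglob X (z + h - X) (z + l - X)
      simp only [Ψ, add_sub_cancel] at h1
      simp only [Pi.sub_apply, sub_add_cancel_left, norm_neg]
      rw [norm_sub_rev X, norm_sub_rev X]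
      linarith

lemma G_convex {n : ℕ} {H : EuclideanSpace ℝ (Fin n) → EuclideanSpace ℝ (Fin n) → ℝ}
    (hHsmooth : ContDiff ℝ 2 (fun q : EuclideanSpace ℝ (Fin n) × EuclideanSpace ℝ (Fin n) => H q.1 q.2))
    {l₀ : ℝ}
    (hA4mat : ∀ (x p v : EuclideanSpace ℝ (Fin n)),
      0 ≤ l₀ ^ 2 * (fderiv ℝ (H x) p v) ^ 2 + l₀ * (fderiv ℝ (fderiv ℝ (H x)) p v v))
    (x p q : EuclideanSpace ℝ (Fin n)) {t : ℝ} (ht0 : 0 < t) (ht1 : t < 1) :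
    Real.exp (l₀ * H x ((1 - t) • p + t • q)) ≤
      (1 - t) * Real.exp (l₀ * H x p) + t * Real.exp (l₀ * H x q) := by
  have hHx : ContDiff ℝ 2 (H x) := hHsmooth.comp (contDiff_const.prodMk contDiff_id)
  set v := q - p with hv
  have hline : ∀ r : ℝ, HasDerivAt (fun r : ℝ => p + r • v) v r := fun r => by
    simpa using ((hasDerivAt_id r).smul_const v).const_add p
  have hd1 : ∀ r : ℝ, HasDerivAt (fun r : ℝ => H x (p + r • v)) (fderiv ℝ (H x) (p + r • v) v) r :=
    fun r => ((hHx.differentiable (by norm_num)) (p + r • v)).hasFDerivAt.comp_hasDerivAt r (hline r)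
  have hf : Differentiable ℝ (fderiv ℝ (H x)) :=
    (hHx.fderiv_right (m := 1) (by norm_num)).differentiable (by norm_num)
  have hd2 : ∀ r : ℝ, HasDerivAt (fun r : ℝ => fderiv ℝ (H x) (p + r • v) v)
      (fderiv ℝ (fderiv ℝ (H x)) (p + r • v) v v) r := fun r =>
    (ContinuousLinearMap.apply ℝ ℝ v).hasFDerivAt.comp_hasDerivAt r
      ((hf (p + r • v)).hasFDerivAt.comp_hasDerivAt r (hline r))
  set g : ℝ → ℝ := fun r => Real.exp (l₀ * H x (p + r • v)) with hg
  have hg1 : ∀ r, HasDerivAt g (g r * (l₀ * fderiv ℝ (H x) (p + r • v) v)) r :=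
    fun r => ((hd1 r).const_mul l₀).exp
  have hg2 : ∀ r, HasDerivAt (fun r => g r * (l₀ * fderiv ℝ (H x) (p + r • v) v))
      (g r * (l₀ * fderiv ℝ (H x) (p + r • v) v) * (l₀ * fderiv ℝ (H x) (p + r • v) v) +
        g r * (l₀ * fderiv ℝ (fderiv ℝ (H x)) (p + r • v) v v)) r :=
    fun r => (hg1 r).mul ((hd2 r).const_mul l₀)
  have hdg : deriv g = fun r => g r * (l₀ * fderiv ℝ (H x) (p + r • v) v) :=
    funext fun r => (hg1 r).deriv
  have hconv : ConvexOn ℝ univ g := by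
    apply convexOn_univ_of_deriv2_nonneg
    · exact fun r => (hg1 r).differentiableAt
    · rw [hdg]; exact fun r => (hg2 r).differentiableAt
    · intro r
      simp only [Function.iterate_succ, Function.iterate_zero, Function.comp, id]
      rw [hdg, (hg2 r).deriv]
      have h1 := hA4mat x (p + r • v) v
      have h2 : 0 ≤ g r := (Real.exp_pos _).le
      nlinarith [mul_nonneg h2 h1]
  have := hconv.2 (mem_univ 0) (mem_univ 1) (by linarith : 0 ≤ 1 - t) ht0.le (by ring)
  simp only [hg, smul_eq_mul, mul_zero, mul_one, zero_add, zero_smul, add_zero, one_smul] at this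
  have e : p + t • v = (1 - t) • p + t • q := by rw [hv]; module
  have e2 : p + v = q := by rw [hv]; abel
  rwa [e, e2] at this

/-- Key comparison lemma. -/
lemma key_comp {n : ℕ} {H : EuclideanSpace ℝ (Fin n) → EuclideanSpace ℝ (Fin n) → ℝ}
    (hHsmooth : ContDiff ℝ 2 (fun q : EuclideanSpace ℝ (Fin n) × EuclideanSpace ℝ (Fin n) => H q.1 q.2))
    (hcoer : ∀ C : ℝ, ∃ R : ℝ, ∀ (x p : EuclideanSpace ℝ (Fin n)), R ≤ ‖p‖ → C ≤ H x p)
    {l₀ : ℝ} (hl₀ : 0 < l₀)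
    (hA4mat : ∀ (x p v : EuclideanSpace ℝ (Fin n)),
      0 ≤ l₀ ^ 2 * (fderiv ℝ (H x) p v) ^ 2 + l₀ * (fderiv ℝ (fderiv ℝ (H x)) p v v))
    {w a s : EuclideanSpace ℝ (Fin n) → ℝ}
    (cw : Continuous w) (pw : ZnPeriodic w) (ca : Continuous a) (pa : ZnPeriodic a)
    (cs : Continuous s) (ps : ZnPeriodic s) {c1 c2 c3 : ℝ}
    (hw : ViscSub (fun x r p => c1 * r + H x p) w)
    (ha : ViscSub (fun x r p => c2 * r + H x p) a)
    (hs : ViscSuper (fun x r p => c3 * r + H x p) s)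
    {t : ℝ} (ht0 : 0 < t) (ht1 : t < 1) :
    ∃ z : EuclideanSpace ℝ (Fin n),
      (∀ X, (1 - t) * w X + t * a X - s X ≤ (1 - t) * w z + t * a z - s z) ∧
      Real.exp (-(l₀ * (c3 * s z))) ≤
        (1 - t) * Real.exp (-(l₀ * (c1 * w z))) + t * Real.exp (-(l₀ * (c2 * a z))) := by
  have hHc : Continuous (fun q : EuclideanSpace ℝ (Fin n) × EuclideanSpace ℝ (Fin n) => H q.1 q.2) :=
    hHsmooth.continuous
  obtain ⟨Q, hQ0, hQ⟩ := exists_latv n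
  obtain ⟨B1, hB1, hwB⟩ := per_bdd cw pw
  obtain ⟨B2, hB2, haB⟩ := per_bdd ca pa
  obtain ⟨R, hR⟩ := hcoer (|c1| * B1 + |c2| * B2 + 1)
  have hbd1 : ∀ x, -(c1 * w x) ≤ |c1| * B1 := fun x => by
    calc -(c1 * w x) ≤ |c1 * w x| := neg_le_abs _
      _ = |c1| * |w x| := abs_mul _ _
      _ ≤ |c1| * B1 := by gcongr; exact hwB x
  have hbd2 : ∀ x, -(c2 * a x) ≤ |c2| * B2 := fun x => by
    calc -(c2 * a x) ≤ |c2 * a x| := neg_le_abs _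
      _ = |c2| * |a x| := abs_mul _ _
      _ ≤ |c2| * B2 := by gcongr; exact haB x
  have hc1 : 0 ≤ |c1| * B1 := by positivity
  have hc2 : 0 ≤ |c2| * B2 := by positivity
  have step : ∀ k : ℕ, ∃ q : EuclideanSpace ℝ (Fin n) × EuclideanSpace ℝ (Fin n) ×
      EuclideanSpace ℝ (Fin n),
      q ∈ Metric.closedBall (0 : EuclideanSpace ℝ (Fin n)) Q ×ˢ
        (Metric.closedBall (0 : EuclideanSpace ℝ (Fin n)) R ×ˢ
          Metric.closedBall (0 : EuclideanSpace ℝ (Fin n)) R) ∧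
      (∀ X, (1 - t) * w X + t * a X - s X ≤ (1 - t) * w (q.1 + (1 / ((k : ℝ) + 1)) • q.2.1)
        + t * a (q.1 + (1 / ((k : ℝ) + 1)) • q.2.2) - s q.1) ∧
      c1 * w (q.1 + (1 / ((k : ℝ) + 1)) • q.2.1) + H (q.1 + (1 / ((k : ℝ) + 1)) • q.2.1) q.2.1 ≤ 0 ∧
      c2 * a (q.1 + (1 / ((k : ℝ) + 1)) • q.2.2) + H (q.1 + (1 / ((k : ℝ) + 1)) • q.2.2) q.2.2 ≤ 0 ∧
      0 ≤ c3 * s q.1 + H q.1 ((1 - t) • q.2.1 + t • q.2.2) := by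
    intro k
    have hk : (0:ℝ) < (k:ℝ) + 1 := by positivity
    obtain ⟨z, h, l, hz, h1, h2, h3, h4⟩ := triple cw pw ca pa cs ps hw ha hs ht0 ht1 hQ0 hQ
      (α := ((k:ℝ) + 1) / 2) (by positivity)
    have e : 2 * (((k:ℝ) + 1) / 2) = (k:ℝ) + 1 := by ring
    rw [e] at h2 h3 h4
    have e1 : ∀ v : EuclideanSpace ℝ (Fin n), (1 / ((k:ℝ) + 1)) • ((k:ℝ) + 1) • v = v := fun v => by
      rw [smul_smul, one_div_mul_cancel hk.ne', one_smul]
    refine ⟨(z, ((k:ℝ) + 1) • h, ((k:ℝ) + 1) • l), ⟨mem_closedBall_zero_iff.2 hz,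
      mem_closedBall_zero_iff.2 ?_, mem_closedBall_zero_iff.2 ?_⟩, ?_, ?_, ?_, ?_⟩
    · by_contra hcon
      have := hR (z + h) _ (not_le.1 hcon).le
      have := hbd1 (z + h)
      linarith
    · by_contra hcon
      have := hR (z + l) _ (not_le.1 hcon).le
      have := hbd2 (z + l)
      linarith
    · simpa only [e1] using h1
    · simpa only [e1] using h2
    · simpa only [e1] using h3
    · exact h4
  choose q hqmem hq1 hq2 hq3 hq4 using step
  obtain ⟨⟨z, p1, p2⟩, _, φ, hφ, hlim⟩ := ((isCompact_closedBall (0 : EuclideanSpace ℝ (Fin n)) Q).prod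
    ((isCompact_closedBall (0 : EuclideanSpace ℝ (Fin n)) R).prod
    (isCompact_closedBall (0 : EuclideanSpace ℝ (Fin n)) R))).tendsto_subseq hqmem
  have lz : Tendsto (fun k => (q (φ k)).1) atTop (𝓝 z) := hlim.fst_nhds
  have lp1 : Tendsto (fun k => (q (φ k)).2.1) atTop (𝓝 p1) := hlim.snd_nhds.fst_nhds
  have lp2 : Tendsto (fun k => (q (φ k)).2.2) atTop (𝓝 p2) := hlim.snd_nhds.snd_nhds
  have lk : Tendsto (fun k => 1 / ((φ k : ℝ) + 1)) atTop (𝓝 0) :=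
    tendsto_one_div_add_atTop_nhds_zero_nat.comp hφ.tendsto_atTop
  have lx : Tendsto (fun k => (q (φ k)).1 + (1 / ((φ k : ℝ) + 1)) • (q (φ k)).2.1) atTop (𝓝 z) := by
    simpa using lz.add (lk.smul lp1)
  have ly : Tendsto (fun k => (q (φ k)).1 + (1 / ((φ k : ℝ) + 1)) • (q (φ k)).2.2) atTop (𝓝 z) := by
    simpa using lz.add (lk.smul lp2)
  have lw := (cw.tendsto z).comp lx
  have la := (ca.tendsto z).comp ly
  have ls := (cs.tendsto z).comp lz
  have lH1 := (hHc.tendsto (z, p1)).comp (lx.prodMk_nhds lp1)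
  have lH2 := (hHc.tendsto (z, p2)).comp (ly.prodMk_nhds lp2)
  have lH3 := (hHc.tendsto (z, (1 - t) • p1 + t • p2)).comp
    (lz.prodMk_nhds ((lp1.const_smul (1 - t)).add (lp2.const_smul t)))
  have r1 : ∀ X, (1 - t) * w X + t * a X - s X ≤ (1 - t) * w z + t * a z - s z := fun X =>
    ge_of_tendsto' (((lw.const_mul (1 - t)).add (la.const_mul t)).sub ls) (fun k => hq1 (φ k) X)
  have r2 : c1 * w z + H z p1 ≤ 0 :=
    le_of_tendsto' ((lw.const_mul c1).add lH1) (fun k => hq2 (φ k))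
  have r3 : c2 * a z + H z p2 ≤ 0 :=
    le_of_tendsto' ((la.const_mul c2).add lH2) (fun k => hq3 (φ k))
  have r4 : 0 ≤ c3 * s z + H z ((1 - t) • p1 + t • p2) :=
    ge_of_tendsto' ((ls.const_mul c3).add lH3) (fun k => hq4 (φ k))
  refine ⟨z, r1, ?_⟩
  calc Real.exp (-(l₀ * (c3 * s z))) ≤ Real.exp (l₀ * H z ((1 - t) • p1 + t • p2)) := by
        apply Real.exp_le_exp.2; nlinarith
    _ ≤ (1 - t) * Real.exp (l₀ * H z p1) + t * Real.exp (l₀ * H z p2) :=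
        G_convex hHsmooth hA4mat z p1 p2 ht0 ht1
    _ ≤ _ := by
        have : 0 ≤ 1 - t := by linarith
        gcongr <;> nlinarith

/-- Lipschitz bound. -/
lemma lip_of_grad {n : ℕ} {u : EuclideanSpace ℝ (Fin n) → ℝ} (hc : Continuous u) {B R : ℝ}
    (hB : ∀ x, |u x| ≤ B) (hR : 0 < R)
    (hg : ∀ φ : EuclideanSpace ℝ (Fin n) → ℝ, ContDiff ℝ 1 φ →
      ∀ x₀ : EuclideanSpace ℝ (Fin n), IsLocalMax (u - φ) x₀ → ‖gradient φ x₀‖ ≤ R)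
    (x y : EuclideanSpace ℝ (Fin n)) : |u x - u y| ≤ 2 * R * ‖x - y‖ := by
  have main : ∀ x₀ x : EuclideanSpace ℝ (Fin n), u x ≤ u x₀ + 2 * R * ‖x - x₀‖ := by
    intro x₀ x
    have hB0 : 0 ≤ B := (abs_nonneg _).trans (hB x₀)
    have claim : ∀ κ : ℝ, 0 < κ → ∃ x₁, ‖x₁ - x₀‖ ≤ κ ∧ u x ≤ u x₁ + 2 * R * (‖x - x₀‖ + κ) := by
      intro κ hκ
      let φ : EuclideanSpace ℝ (Fin n) → ℝ := fun x => 2 * R * Real.sqrt (‖x - x₀‖ ^ 2 + κ ^ 2)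
      have hpos : ∀ x : EuclideanSpace ℝ (Fin n), 0 < ‖x - x₀‖ ^ 2 + κ ^ 2 := fun x => by positivity
      have hφ : ContDiff ℝ 1 φ :=
        contDiff_const.mul ((((contDiff_id.sub contDiff_const).norm_sq ℝ).add contDiff_const).sqrt
          (fun x => (hpos x).ne'))
      have hgrad : ∀ x, HasGradientAt φ ((2 * R / Real.sqrt (‖x - x₀‖ ^ 2 + κ ^ 2)) • (x - x₀)) x := by
        intro x
        rw [hasGradientAt_iff_hasFDerivAt]
        have h := (((((hasFDerivAt_id (𝕜 := ℝ) x).sub_const x₀).norm_sq).add_const (κ ^ 2)).sqrt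
          (hpos x).ne').const_mul (2 * R)
        refine h.congr_fderiv ?_
        ext v
        simp
        ring
      have hsq : ∀ x : EuclideanSpace ℝ (Fin n), ‖x - x₀‖ ≤ Real.sqrt (‖x - x₀‖ ^ 2 + κ ^ 2) :=
        fun x => Real.le_sqrt_of_sq_le (by nlinarith)
      have hφ0 : φ x₀ = 2 * R * κ := by
        simp [φ, Real.sqrt_sq hκ.le]
      obtain ⟨x₁, hx₁m, hx₁⟩ := (isCompact_closedBall x₀ (B / R + κ)).exists_isMaxOn
        ⟨x₀, Metric.mem_closedBall_self (by positivity)⟩ (hc.sub hφ.continuous).continuousOn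
      rw [isMaxOn_iff] at hx₁
      have h0 := hx₁ x₀ (Metric.mem_closedBall_self (by positivity))
      have hglob : ∀ y, u y - φ y ≤ u x₁ - φ x₁ := by
        intro y
        by_cases hy : y ∈ Metric.closedBall x₀ (B / R + κ)
        · exact hx₁ y hy
        · rw [Metric.mem_closedBall, dist_eq_norm, not_le] at hy
          have h1 : 2 * R * (B / R + κ) ≤ φ y := by
            apply mul_le_mul_of_nonneg_left (hy.le.trans (hsq y)); positivity
          have h2 : 2 * R * (B / R + κ) = 2 * B + 2 * R * κ := by field_simp
          have h3 := (abs_le.1 (hB y)).2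
          have h4 := (abs_le.1 (hB x₀)).1
          change u x₀ - φ x₀ ≤ u x₁ - φ x₁ at h0
          linarith
      have hgr := hg φ hφ x₁ (Eventually.of_forall hglob)
      rw [(hgrad x₁).gradient, norm_smul, Real.norm_eq_abs, abs_of_nonneg (by positivity)] at hgr
      have hS : 0 < Real.sqrt (‖x₁ - x₀‖ ^ 2 + κ ^ 2) := Real.sqrt_pos.2 (hpos _)
      have hS2 : Real.sqrt (‖x₁ - x₀‖ ^ 2 + κ ^ 2) ^ 2 = ‖x₁ - x₀‖ ^ 2 + κ ^ 2 :=
        Real.sq_sqrt (hpos _).le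
      rw [div_mul_eq_mul_div, div_le_iff₀ hS] at hgr
      have hgr2 : 2 * ‖x₁ - x₀‖ ≤ Real.sqrt (‖x₁ - x₀‖ ^ 2 + κ ^ 2) := by
        apply le_of_mul_le_mul_left _ hR; linarith
      refine ⟨x₁, ?_, ?_⟩
      · have : (2 * ‖x₁ - x₀‖) ^ 2 ≤ ‖x₁ - x₀‖ ^ 2 + κ ^ 2 := by
          rw [← hS2]; gcongr
        apply le_of_sq_le_sq _ hκ.le
        nlinarith [sq_nonneg ‖x₁ - x₀‖]
      · have h1 := hglob x
        have h2 : 0 ≤ φ x₁ := by positivity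
        have h3 : φ x ≤ 2 * R * (‖x - x₀‖ + κ) := by
          apply mul_le_mul_of_nonneg_left _ (by positivity)
          apply Real.sqrt_le_iff.2 ⟨by positivity, by nlinarith [norm_nonneg (x - x₀)]⟩
        linarith
    apply le_of_forall_pos_le_add
    intro η hη
    obtain ⟨r, hr, hcr⟩ := Metric.continuous_iff.1 hc x₀ (η / 2) (by positivity)
    obtain ⟨x₁, h1, h2⟩ := claim (min (r / 2) (η / (4 * R))) (by positivity)
    have h3 := hcr x₁ (by rw [dist_eq_norm]; linarith [min_le_left (r / 2) (η / (4 * R))])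
    rw [Real.dist_eq] at h3
    have h4 := (abs_lt.1 h3).2
    have h5 : 2 * R * min (r / 2) (η / (4 * R)) ≤ η / 2 := by
      calc 2 * R * min (r / 2) (η / (4 * R)) ≤ 2 * R * (η / (4 * R)) := by
            gcongr; exact min_le_right _ _
        _ = η / 2 := by field_simp; norm_num
    linarith
  rw [abs_le]
  have h1 := main y x
  have h2 := main x y
  rw [norm_sub_rev] at h2
  constructor <;> linarith

/-- Stability of subsolutions. -/
lemma stab_sub {n : ℕ} {K : EuclideanSpace ℝ (Fin n) → EuclideanSpace ℝ (Fin n) → ℝ}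
    (hK : Continuous (fun q : EuclideanSpace ℝ (Fin n) × EuclideanSpace ℝ (Fin n) => K q.1 q.2))
    {l : Filter ℝ} [l.NeBot] (hl : l ≤ 𝓝[>] (0:ℝ)) {v : ℝ → EuclideanSpace ℝ (Fin n) → ℝ}
    {u0 : EuclideanSpace ℝ (Fin n) → ℝ} {B : ℝ}
    (hv : ∀ᶠ ε in l, Continuous (v ε) ∧ (∀ x, |v ε x| ≤ B) ∧
      ViscSub (fun x r p => ε * r + K x p) (v ε))
    (hlim : TendstoUniformly v u0 l) : ViscSub (fun x _ p => K x p) u0 := by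
  intro φ hφ x₀ hmax
  by_contra hcon
  simp only [not_le] at hcon
  have hgc : Continuous (gradient φ) :=
    (InnerProductSpace.toDual ℝ (EuclideanSpace ℝ (Fin n))).symm.continuous.comp
      (hφ.continuous_fderiv (by norm_num))
  let F : EuclideanSpace ℝ (Fin n) → ℝ := fun x => K x (gradient φ x + (2 * (1:ℝ)) • (x - x₀))
  have hF : Continuous F := hK.comp (continuous_id.prodMk
    (hgc.add ((continuous_id.sub continuous_const).const_smul (2 * (1:ℝ)))))
  have hF0 : F x₀ = K x₀ (gradient φ x₀) := by simp [F]
  have hc0 : 0 < F x₀ := by rw [hF0]; exact hcon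
  have hev : ∀ᶠ x in 𝓝 x₀, F x₀ / 2 < F x ∧ (u0 - φ) x ≤ (u0 - φ) x₀ :=
    ((hF.tendsto x₀).eventually (lt_mem_nhds (by linarith))).and hmax
  obtain ⟨r, hr, hball⟩ := Metric.eventually_nhds_iff_ball.1 hev
  have hr2 : 0 < (r / 2) ^ 2 / 4 := by positivity
  have hεB : ∀ᶠ ε in l, ε * B < F x₀ / 2 := by
    apply (hl.trans nhdsWithin_le_nhds)
    have : Tendsto (fun ε : ℝ => ε * B) (𝓝 0) (𝓝 (0 * B)) := tendsto_id.mul_const B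
    rw [zero_mul] at this
    exact this.eventually (gt_mem_nhds (by linarith))
  have hpos : ∀ᶠ ε in l, (0:ℝ) < ε := hl self_mem_nhdsWithin
  obtain ⟨ε, ⟨hvc, hvB, hvs⟩, hεB, hε, hd⟩ := (hv.and (hεB.and (hpos.and
    (Metric.tendstoUniformly_iff.1 hlim _ hr2)))).exists
  obtain ⟨x₁, hx₁m, hx₁⟩ := (isCompact_closedBall x₀ (r / 2)).exists_isMaxOn
    ⟨x₀, Metric.mem_closedBall_self (by positivity)⟩
    (hvc.sub (hφ.add (contDiff_quad 1 x₀)).continuous).continuousOn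
  rw [isMaxOn_iff] at hx₁
  have hx₁b : x₁ ∈ Metric.ball x₀ r := Metric.closedBall_subset_ball (by linarith) hx₁m
  have h0 := hx₁ x₀ (Metric.mem_closedBall_self (by positivity))
  have h1 := (hball x₁ hx₁b).2
  have hd0 := hd x₀
  have hd1 := hd x₁
  rw [Real.dist_eq, abs_lt] at hd0 hd1
  simp only [Pi.sub_apply, sub_self, norm_zero] at h0 h1
  have hlt : ‖x₁ - x₀‖ < r / 2 := by
    apply lt_of_pow_lt_pow_left₀ 2 (by positivity)
    nlinarith [hd0.1, hd0.2, hd1.1, hd1.2]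
  have hloc : IsLocalMax (v ε - (fun x => φ x + 1 * ‖x - x₀‖ ^ 2)) x₁ := by
    have : Metric.closedBall x₀ (r / 2) ∈ 𝓝 x₁ :=
      mem_of_superset (Metric.isOpen_ball.mem_nhds (by rw [Metric.mem_ball, dist_eq_norm]; exact hlt))
        Metric.ball_subset_closedBall
    filter_upwards [this] with y hy
    exact hx₁ y hy
  have h2 := hvs _ (hφ.add (contDiff_quad 1 x₀)) x₁ hloc
  have hgr : HasGradientAt (fun x => φ x + 1 * ‖x - x₀‖ ^ 2)
      (gradient φ x₁ + (2 * (1:ℝ)) • (x₁ - x₀)) x₁ := by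
    have e1 := ((hφ.differentiable (by norm_num)) x₁).hasGradientAt
    have e2 := grad_quad 1 x₀ x₁
    rw [hasGradientAt_iff_hasFDerivAt] at *
    rw [map_add]
    exact e1.add e2
  rw [hgr.gradient] at h2
  have h3 : F x₀ / 2 < F x₁ := (hball x₁ hx₁b).1
  have h4 := (abs_le.1 (hvB x₁)).1
  have h5 : ε * v ε x₁ + F x₁ ≤ 0 := h2
  have h6 := mul_le_mul_of_nonneg_left h4 hε.le
  linarith

lemma visc_super_neg {n : ℕ} {E : EuclideanSpace ℝ (Fin n) → ℝ → EuclideanSpace ℝ (Fin n) → ℝ}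
    {u : EuclideanSpace ℝ (Fin n) → ℝ} :
    ViscSuper E u ↔ ViscSub (fun x r p => -E x (-r) (-p)) (-u) := by
  have hgr : ∀ (φ : EuclideanSpace ℝ (Fin n) → ℝ) x, gradient (-φ) x = -gradient φ x := by
    intro φ x
    simp [gradient, fderiv_neg]
  constructor
  · intro h φ hφ x₀ hm
    have := h (-φ) hφ.neg x₀ (by
      have := hm.neg
      refine this.congr (Eventually.of_forall fun x => ?_)
      simp; ring)
    rw [hgr] at this
    simpa using this
  · intro h φ hφ x₀ hm
    have := h (-φ) hφ.neg x₀ (by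
      have := hm.neg
      refine this.congr (Eventually.of_forall fun x => ?_)
      simp; ring)
    rw [hgr] at this
    simpa using this

lemma stab_super {n : ℕ} {K : EuclideanSpace ℝ (Fin n) → EuclideanSpace ℝ (Fin n) → ℝ}
    (hK : Continuous (fun q : EuclideanSpace ℝ (Fin n) × EuclideanSpace ℝ (Fin n) => K q.1 q.2))
    {l : Filter ℝ} [l.NeBot] (hl : l ≤ 𝓝[>] (0:ℝ)) {v : ℝ → EuclideanSpace ℝ (Fin n) → ℝ}
    {u0 : EuclideanSpace ℝ (Fin n) → ℝ} {B : ℝ}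
    (hv : ∀ᶠ ε in l, Continuous (v ε) ∧ (∀ x, |v ε x| ≤ B) ∧
      ViscSuper (fun x r p => ε * r + K x p) (v ε))
    (hlim : TendstoUniformly v u0 l) : ViscSuper (fun x _ p => K x p) u0 := by
  rw [visc_super_neg]
  apply stab_sub (K := fun x p => -K x (-p)) (v := fun ε x => -v ε x) (B := B) _ hl
  · filter_upwards [hv] with ε h
    refine ⟨h.1.neg, fun x => by simpa using h.2.1 x, ?_⟩
    have := visc_super_neg.1 h.2.2
    intro φ hφ x₀ hm
    have := this φ hφ x₀ hm
    simp only [Pi.neg_apply] at this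
    linarith
  · rw [Metric.tendstoUniformly_iff] at *
    intro e he
    filter_upwards [hlim e he] with ε h x
    simpa [dist_neg_neg] using h x
  · exact (hK.comp (continuous_fst.prodMk continuous_snd.neg)).neg

lemma unif_of_ptwise {n : ℕ} {l : Filter ℝ} {v : ℝ → EuclideanSpace ℝ (Fin n) → ℝ}
    {u0 : EuclideanSpace ℝ (Fin n) → ℝ} {L : ℝ} (hL0 : 0 ≤ L)
    (hv : ∀ᶠ ε in l, (∀ x y, |v ε x - v ε y| ≤ L * ‖x - y‖) ∧ ZnPeriodic (v ε))
    (hu : ∀ x y, |u0 x - u0 y| ≤ L * ‖x - y‖) (hp : ZnPeriodic u0)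
    (hlim : ∀ x, Tendsto (fun ε => v ε x) l (𝓝 (u0 x))) : TendstoUniformly v u0 l := by
  rw [Metric.tendstoUniformly_iff]
  intro η hη
  obtain ⟨Q, hQ0, hQ⟩ := exists_latv n
  obtain ⟨T, -, hTf, hT⟩ := (isCompact_closedBall (0 : EuclideanSpace ℝ (Fin n)) Q).finite_cover_balls
    (e := η / (4 * (L + 1))) (by positivity)
  have hev : ∀ᶠ ε in l, ∀ x ∈ T, dist (v ε x) (u0 x) < η / 4 :=
    (Filter.eventually_all_finite hTf).2 fun x _ => (Metric.tendsto_nhds.1 (hlim x)) _ (by positivity)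
  filter_upwards [hv, hev] with ε h1 h2 x
  obtain ⟨k, hk⟩ := hQ x
  have e1 : u0 x = u0 (x + latv k) := (hp x k).symm
  have e2 : v ε x = v ε (x + latv k) := (h1.2 x k).symm
  rw [e1, e2]
  obtain ⟨y, hy, hxy⟩ := mem_iUnion₂.1 (hT (mem_closedBall_zero_iff.2 hk))
  rw [Metric.mem_ball, dist_eq_norm] at hxy
  have h3 := hu (x + latv k) y
  have h4 := h1.1 (x + latv k) y
  have h5 := h2 y hy
  rw [Real.dist_eq] at *
  have h6 : L * ‖x + latv k - y‖ ≤ η / 4 := by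
    calc L * ‖x + latv k - y‖ ≤ (L + 1) * (η / (4 * (L + 1))) := by gcongr; linarith
      _ = η / 4 := by field_simp
  rw [abs_le] at h3 h4
  rw [abs_lt] at h5 ⊢
  constructor <;> linarith [h3.1, h3.2, h4.1, h4.2, h5.1, h5.2]


theorem stmt1 {n : ℕ}
    (H : EuclideanSpace ℝ (Fin n) → EuclideanSpace ℝ (Fin n) → ℝ)
    -- H ∈ C²(𝕋ⁿ × ℝⁿ)
    (hHsmooth : ContDiff ℝ 2 (fun q : EuclideanSpace ℝ (Fin n) × EuclideanSpace ℝ (Fin n) => H q.1 q.2))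
    (hHper : ∀ (x p : EuclideanSpace ℝ (Fin n)) (k : Fin n → ℤ),
      H (x + (EuclideanSpace.equiv (Fin n) ℝ).symm (fun i => (k i : ℝ))) p = H x p)
    -- coercivity: H(x,p) → +∞ as |p| → ∞, uniformly in x
    (hcoer : ∀ C : ℝ, ∃ R : ℝ, ∀ (x p : EuclideanSpace ℝ (Fin n)), R ≤ ‖p‖ → C ≤ H x p)
    (l₀ : ℝ) (hl₀ : 0 < l₀)
    -- (A4): sublevel sets are convex
    (hA4conv : ∀ (a : ℝ) (x : EuclideanSpace ℝ (Fin n)), Convex ℝ {p | H x p ≤ a})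
    -- (A4): l₀² D_pH ⊗ D_pH + l₀ D²_pp H ≥ 0
    (hA4mat : ∀ (x p v : EuclideanSpace ℝ (Fin n)),
      0 ≤ l₀ ^ 2 * (fderiv ℝ (H x) p v) ^ 2 + l₀ * (fderiv ℝ (fderiv ℝ (H x)) p v v))
    -- (A5): G(x,p) = e^{l₀ H(x,p)} satisfies (A1)
    (hA5 : ∀ C : ℝ, ∃ R : ℝ, ∀ (x p : EuclideanSpace ℝ (Fin n)), R ≤ ‖p‖ →
      C ≤ (Real.exp (l₀ * H x p)) ^ 2 / (2 * ‖p‖) -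
        ‖fderiv ℝ (fun y => Real.exp (l₀ * H y p)) x‖)
    -- the ergodic equation H(x,Du) = 0 has a continuous viscosity solution (H̄ = 0)
    (hErg : ∃ w : EuclideanSpace ℝ (Fin n) → ℝ, Continuous w ∧ ZnPeriodic w ∧
      ViscSol (fun x _ p => H x p) w)
    -- for each ε > 0, u ε is a continuous viscosity solution of ε uᵉ + H(x,Duᵉ) = 0
    (u : ℝ → EuclideanSpace ℝ (Fin n) → ℝ)
    (hu : ∀ ε : ℝ, 0 < ε → Continuous (u ε) ∧ ZnPeriodic (u ε) ∧
      ViscSol (fun x r p => ε * r + H x p) (u ε)) :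
    ∃ u0 : EuclideanSpace ℝ (Fin n) → ℝ, Continuous u0 ∧ ZnPeriodic u0 ∧
      TendstoUniformly u u0 (𝓝[>] (0 : ℝ)) ∧
      ViscSol (fun x _ p => H x p) u0 := by
  have hHc : Continuous (fun q : EuclideanSpace ℝ (Fin n) × EuclideanSpace ℝ (Fin n) => H q.1 q.2) :=
    hHsmooth.continuous
  -- uniform bound
  obtain ⟨B, hB0, hB⟩ : ∃ B : ℝ, 0 ≤ B ∧ ∀ ε : ℝ, 0 < ε → ∀ x, |u ε x| ≤ B := by
    obtain ⟨w, cw, pw, hw1, hw2⟩ := hErg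
    obtain ⟨Bw, hBw, hwB⟩ := per_bdd cw pw
    refine ⟨2 * Bw, by positivity, fun ε hε x => ?_⟩
    obtain ⟨cu, pu, hu1, hu2⟩ := hu ε hε
    have hw1' : ViscSub (fun x r p => 0 * r + H x p) w := by simpa using hw1
    have hw2' : ViscSuper (fun x r p => 0 * r + H x p) w := by simpa using hw2
    obtain ⟨z1, h1, h1'⟩ := key_comp hHsmooth hcoer hl₀ hA4mat cu pu cu pu cw pw hu1 hu1 hw2'
      (t := 1 / 2) (by norm_num) (by norm_num)
    obtain ⟨z2, h2, h2'⟩ := key_comp hHsmooth hcoer hl₀ hA4mat cw pw cw pw cu pu hw1' hw1' hu2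
      (t := 1 / 2) (by norm_num) (by norm_num)
    have h1x := h1 x
    have h2x := h2 x
    have e1 : Real.exp 0 ≤ Real.exp (-(l₀ * (ε * u ε z1))) := by
      have : -(l₀ * (0 * w z1)) = 0 := by ring
      rw [this] at h1'
      linarith
    have e2 : Real.exp (-(l₀ * (ε * u ε z2))) ≤ Real.exp 0 := by
      have : -(l₀ * (0 * w z2)) = 0 := by ring
      rw [this] at h2'
      linarith
    rw [Real.exp_le_exp] at e1 e2
    have hlε : 0 < l₀ * ε := by positivity
    have e1' : u ε z1 ≤ 0 := by
      by_contra hcon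
      have := mul_pos hlε (not_le.1 hcon)
      linarith
    have e2' : 0 ≤ u ε z2 := by
      by_contra hcon
      have := mul_pos hlε (neg_pos.2 (not_le.1 hcon))
      linarith
    have b1 := abs_le.1 (hwB x)
    have b2 := abs_le.1 (hwB z1)
    have b3 := abs_le.1 (hwB z2)
    rw [abs_le]
    constructor <;> linarith [b1.1, b1.2, b2.1, b2.2, b3.1, b3.2]
  -- uniform Lipschitz bound
  obtain ⟨L, hL0, hL⟩ : ∃ L : ℝ, 0 ≤ L ∧ ∀ ε : ℝ, 0 < ε → ε ≤ 1 → ∀ x y,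
      |u ε x - u ε y| ≤ L * ‖x - y‖ := by
    obtain ⟨R, hR⟩ := hcoer (B + 1)
    refine ⟨2 * (|R| + 1), by positivity, fun ε hε hε1 x y => ?_⟩
    apply lip_of_grad (hu ε hε).1 (hB ε hε) (by positivity)
    intro φ hφ x₀ hm
    have h1 := (hu ε hε).2.2.1 φ hφ x₀ hm
    by_contra hcon
    have h2 := hR x₀ (gradient φ x₀) (by linarith [le_abs_self R])
    have h3 := (abs_le.1 (hB ε hε x₀)).1
    have h4 : -B ≤ ε * u ε x₀ := by nlinarith
    simp only at h1
    linarith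
  have hev1 : ∀ᶠ ε in 𝓝[>] (0:ℝ), 0 < ε ∧ ε ≤ 1 := Ioc_mem_nhdsGT one_pos
  -- limits along ultrafilters
  have ultra : ∀ V : Ultrafilter ℝ, (V : Filter ℝ) ≤ 𝓝[>] (0:ℝ) →
      ∃ v : EuclideanSpace ℝ (Fin n) → ℝ, (∀ x y, |v x - v y| ≤ L * ‖x - y‖) ∧ Continuous v ∧
        ZnPeriodic v ∧ TendstoUniformly u v V ∧ ViscSol (fun x _ p => H x p) v := by
    intro V hV
    have hevV : ∀ᶠ ε in (V : Filter ℝ), 0 < ε ∧ ε ≤ 1 := hV hev1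
    have hpt : ∀ x, ∃ y, Tendsto (fun ε => u ε x) V (𝓝 y) := by
      intro x
      have hIcc : ∀ᶠ ε in (V : Filter ℝ), u ε x ∈ Icc (-B) B := by
        filter_upwards [hevV] with ε hε
        exact abs_le.1 (hB ε hε.1 x)
      obtain ⟨y, -, hy⟩ := isCompact_iff_ultrafilter_le_nhds.1 (isCompact_Icc (a := -B) (b := B))
        (V.map (fun ε => u ε x)) (by rw [le_principal_iff]; exact hIcc)
      exact ⟨y, hy⟩
    choose v hv using hpt
    have hvL : ∀ x y, |v x - v y| ≤ L * ‖x - y‖ := by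
      intro x y
      apply le_of_tendsto ((hv x).sub (hv y)).abs
      filter_upwards [hevV] with ε hε
      exact hL ε hε.1 hε.2 x y
    have hvp : ZnPeriodic v := by
      intro x k
      apply tendsto_nhds_unique (hv _)
      refine (hv x).congr' ?_
      filter_upwards [hevV] with ε hε
      exact ((hu ε hε.1).2.1 x k).symm
    have hvc : Continuous v := by
      apply LipschitzWith.continuous (K := ⟨L, hL0⟩)
      apply LipschitzWith.of_dist_le_mul
      intro x y
      rw [Real.dist_eq, dist_eq_norm]
      exact hvL x y
    have hunif : TendstoUniformly u v V := by
      refine unif_of_ptwise hL0 ?_ hvL hvp hv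
      filter_upwards [hevV] with ε hε
      exact ⟨hL ε hε.1 hε.2, (hu ε hε.1).2.1⟩
    refine ⟨v, hvL, hvc, hvp, hunif, ?_, ?_⟩
    · refine stab_sub hHc hV (B := B) ?_ hunif
      filter_upwards [hevV] with ε hε
      exact ⟨(hu ε hε.1).1, hB ε hε.1, (hu ε hε.1).2.2.1⟩
    · refine stab_super hHc hV (B := B) ?_ hunif
      filter_upwards [hevV] with ε hε
      exact ⟨(hu ε hε.1).1, hB ε hε.1, (hu ε hε.1).2.2.2⟩
  -- one-sided estimate
  have oneside : ∀ V : Ultrafilter ℝ, (V : Filter ℝ) ≤ 𝓝[>] (0:ℝ) →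
      ∀ v : EuclideanSpace ℝ (Fin n) → ℝ, Continuous v → ZnPeriodic v → TendstoUniformly u v V →
        ViscSol (fun x _ p => H x p) v → ∀ η : ℝ, 0 < η →
        ∀ᶠ ε in 𝓝[>] (0:ℝ), ∀ X, v X - u ε X ≤ η := by
    intro V hV v cv pv hunif hsol η hη
    have hv1 : ViscSub (fun x r p => 0 * r + H x p) v := by simpa using hsol.1
    have hδ0 : 0 < min (1 / (l₀ * B + 1)) (η / (2 * (l₀ * B ^ 2 + 1))) := by positivity
    have hevδ : ∀ᶠ δ in (V : Filter ℝ),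
        0 < δ ∧ δ ≤ min (1 / (l₀ * B + 1)) (η / (2 * (l₀ * B ^ 2 + 1))) := hV (Ioc_mem_nhdsGT hδ0)
    obtain ⟨δ, ⟨hδ, hδle⟩, hd⟩ := (hevδ.and
      (Metric.tendstoUniformly_iff.1 hunif (η / 4) (by positivity))).exists
    have hδ1 : δ * (l₀ * B + 1) ≤ 1 := by
      rw [← le_div_iff₀ (by positivity)]; exact hδle.trans (min_le_left _ _)
    have hδ2 : δ * (2 * (l₀ * B ^ 2 + 1)) ≤ η := by
      rw [← le_div_iff₀ (by positivity)]; exact hδle.trans (min_le_right _ _)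
    filter_upwards [Ioo_mem_nhdsGT hδ] with ε hε X
    obtain ⟨hε0, hεδ⟩ := hε
    obtain ⟨ca, pa, ha1, ha2⟩ := hu δ hδ
    obtain ⟨cs, ps, hs1, hs2⟩ := hu ε hε0
    set t := ε / δ with ht
    have ht0 : 0 < t := by positivity
    have ht1 : t < 1 := (div_lt_one hδ).2 hεδ
    have htδ : t * δ = ε := div_mul_cancel₀ _ hδ.ne'
    obtain ⟨z, h1, h2⟩ := key_comp hHsmooth hcoer hl₀ hA4mat cv pv ca pa cs ps hv1 ha1 hs2 ht0 ht1
    have h3 : Real.exp (-(l₀ * (0 * v z))) = 1 := by simp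
    rw [h3] at h2
    have hab := hB δ hδ z
    have hy1 : |-(l₀ * (δ * u δ z))| ≤ 1 := by
      rw [abs_neg, abs_mul, abs_mul, abs_of_pos hl₀, abs_of_pos hδ]
      calc l₀ * (δ * |u δ z|) ≤ l₀ * (δ * B) := by gcongr
        _ ≤ 1 := by linarith
    have h4 := (abs_le.1 (Real.abs_exp_sub_one_sub_id_le hy1)).2
    have h5 := Real.add_one_le_exp (-(l₀ * (ε * u ε z)))
    have h6 : u δ z ^ 2 ≤ B ^ 2 := by
      rw [← sq_abs (u δ z)]; gcongr
    have h7 : t * Real.exp (-(l₀ * (δ * u δ z))) ≤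
        t * (1 - l₀ * (δ * u δ z) + l₀ ^ 2 * δ ^ 2 * B ^ 2) := by
      apply mul_le_mul_of_nonneg_left _ ht0.le
      have : (-(l₀ * (δ * u δ z))) ^ 2 ≤ l₀ ^ 2 * δ ^ 2 * B ^ 2 := by
        calc (-(l₀ * (δ * u δ z))) ^ 2 = l₀ ^ 2 * δ ^ 2 * u δ z ^ 2 := by ring
          _ ≤ _ := by gcongr
      linarith
    have h8 : t * (1 - l₀ * (δ * u δ z) + l₀ ^ 2 * δ ^ 2 * B ^ 2) =
        t - (l₀ * ε) * u δ z + (l₀ * ε) * (l₀ * δ * B ^ 2) := by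
      rw [← htδ]; ring
    have h9 : u δ z - l₀ * δ * B ^ 2 ≤ u ε z := by
      have hle : 0 < l₀ * ε := by positivity
      apply le_of_mul_le_mul_left _ hle
      linarith
    have h10 := h1 X
    have hdz := hd z
    have hdX := hd X
    rw [Real.dist_eq, abs_lt] at hdz hdX
    have h11 : (1 - t) * (v z - u δ z) ≤ (1 - t) * (η / 4) :=
      mul_le_mul_of_nonneg_left hdz.2.le (by linarith)
    have h12 : t * (v X - u δ X) ≤ t * (η / 4) :=
      mul_le_mul_of_nonneg_left hdX.2.le ht0.le
    have h13 : 0 ≤ η * t := by positivity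
    linarith
  obtain ⟨v, hvL, cv, pv, hunif, hsol⟩ := ultra (Ultrafilter.of (𝓝[>] (0:ℝ))) (Ultrafilter.of_le _)
  refine ⟨v, cv, pv, ?_, hsol⟩
  refine unif_of_ptwise hL0 ?_ hvL pv ?_
  · filter_upwards [hev1] with ε hε
    exact ⟨hL ε hε.1 hε.2, (hu ε hε.1).2.1⟩
  · intro x
    rw [tendsto_iff_ultrafilter]
    intro V hV
    obtain ⟨v', hvL', cv', pv', hunif', hsol'⟩ := ultra V hV
    have l1 := hunif.tendsto_at x
    have l2 := hunif'.tendsto_at x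
    have o1 : v x ≤ v' x := by
      apply le_of_forall_pos_le_add
      intro η hη
      have h := hV (oneside _ (Ultrafilter.of_le _) v cv pv hunif hsol η hη)
      have := le_of_tendsto (tendsto_const_nhds.sub l2) (mem_of_superset h fun ε hε => hε x)
      linarith
    have o2 : v' x ≤ v x := by
      apply le_of_forall_pos_le_add
      intro η hη
      have h := (Ultrafilter.of_le (𝓝[>] (0:ℝ))) (oneside V hV v' cv' pv' hunif' hsol' η hη)
      have := le_of_tendsto (tendsto_const_nhds.sub l1) (mem_of_superset h fun ε hε => hε x)
      linarith
    rw [le_antisymm o1 o2]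
    exact l2
end
end
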